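/- arXiv:1707.06531 — 6 statements merged into one kernel-verified Lean document; each statement's English description precedes it below -/
import Mathlib

section
/- Let q be an odd prime power, let n be an odd positive integer, and let χ_2 be the quadratic character of the finite field F_{q^n}. Then for every integer g ≥ 1 and every x ∈ F_{q^n}, the sum over all triples (f1, f2, f3) ∈ F̂_g of χ_2((f1·f3)(x)) + χ_2((f2·f3)(x)) + χ_2((f1·f2)(x)) equals 0, where polynomials in F_q[X] are evaluated at x via the inclusion F_q ⊆ F_{q^n}. -/
open Polynomial Classical

noncomputable section

/-- Quadratic character of a field `K`: 1 on nonzero squares, -1 on nonsquares, 0 at 0. -/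
def quadCharFn (K : Type*) [Field K] (a : K) : ℤ :=
  if a = 0 then 0 else if IsSquare a then 1 else -1

/-- Quadratic residue symbol modulo `P`: 1 if `F` is a nonzero square mod `P`,
-1 if a nonsquare, 0 if `P ∣ F`. -/
def chiP {Fq : Type*} [Field Fq] (P F : Fq[X]) : ℤ :=
  if P ∣ F then 0 else if ∃ G, P ∣ (F - G ^ 2) then 1 else -1

/-- The genus function `L(d1,d2,d3)`. -/
def Lg (d1 d2 d3 : ℕ) : ℕ :=
  if Even (d1 + d3) ∧ Even (d2 + d3) then d1 + d2 + d3 else d1 + d2 + d3 + 1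

/-- The parameter set `F̂_g` of triples of square-free pairwise coprime polynomials,
`f3` monic, satisfying the genus condition and avoiding the degenerate degrees. -/
def FhatSet (Fq : Type*) [Field Fq] (g : ℕ) : Set (Fq[X] × Fq[X] × Fq[X]) :=
  {t | Squarefree t.1 ∧ Squarefree t.2.1 ∧ Squarefree t.2.2 ∧
       IsCoprime t.1 t.2.1 ∧ IsCoprime t.1 t.2.2 ∧ IsCoprime t.2.1 t.2.2 ∧
       t.2.2.Monic ∧
       Lg t.1.natDegree t.2.1.natDegree t.2.2.natDegree = g + 3 ∧
       ({t.1.natDegree, t.2.1.natDegree, t.2.2.natDegree} : Multiset ℕ) ≠ {g + 3, 0, 0} ∧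
       ({t.1.natDegree, t.2.1.natDegree, t.2.2.natDegree} : Multiset ℕ) ≠ {g + 2, 0, 0}}

/-- The parameter set `F_g`: triples in `F̂_g` with all three polynomials monic. -/
def FSet (Fq : Type*) [Field Fq] (g : ℕ) : Set (Fq[X] × Fq[X] × Fq[X]) :=
  {t | t ∈ FhatSet Fq g ∧ t.1.Monic ∧ t.2.1.Monic}

end

theorem qc_neg {K : Type} [Field K] [Fintype K] {a : K} (ha : ¬ IsSquare a) (y : K) :
    quadCharFn K (a * y) = - quadCharFn K y := by
  have h : ∀ z : K, quadCharFn K z = quadraticChar K z := by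
    intro z
    simp only [quadCharFn, quadraticChar_apply, quadraticCharFun]
    congr
  rw [h, h, map_mul, quadraticChar_neg_one_iff_not_isSquare.mpr ha]
  ring

theorem nonsq_ext {Fq K : Type} [Field Fq] [Fintype Fq] [Field K] [Fintype K] [Algebra Fq K]
    (n : ℕ) (hn : Odd n) (hK : Fintype.card K = Fintype.card Fq ^ n) {a : Fq}
    (ha : ¬ IsSquare a) : ¬ IsSquare (algebraMap Fq K a) := by
  rintro ⟨b, hb⟩
  apply ha
  have hr : Module.finrank Fq K = n := by
    have h := Module.card_eq_pow_finrank (K := Fq) (V := K)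
    rw [hK] at h
    exact (Nat.pow_right_injective (Fintype.one_lt_card (α := Fq)) h).symm
  have h := congrArg (Algebra.norm Fq) hb
  rw [Algebra.norm_algebraMap, map_mul, hr] at h
  obtain ⟨m, rfl⟩ := hn
  have ha0 : a ≠ 0 := by
    rintro rfl
    exact ha (IsSquare.zero)
  refine ⟨Algebra.norm Fq b / a ^ m, ?_⟩
  have : a ^ m ≠ 0 := pow_ne_zero _ ha0
  field_simp
  rw [pow_two (Algebra.norm Fq b), ← h]
  ring

theorem fhat_finite (Fq : Type) [Field Fq] [Fintype Fq] (g : ℕ) : (FhatSet Fq g).Finite := by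
  have hD : {p : Fq[X] | p.natDegree ≤ g + 3}.Finite := by
    have : Finite (Polynomial.degreeLT Fq (g + 4)) :=
      Finite.of_equiv _ (Polynomial.degreeLTEquiv Fq (g + 4)).symm.toEquiv
    refine (Set.toFinite ((Polynomial.degreeLT Fq (g + 4) : Set Fq[X]))).subset ?_
    intro p hp
    have hp' : p.natDegree ≤ g + 3 := hp
    simp only [SetLike.mem_coe, Polynomial.mem_degreeLT]
    refine lt_of_le_of_lt Polynomial.degree_le_natDegree ?_
    exact_mod_cast (by omega : p.natDegree < g + 4)
  refine (hD.prod (hD.prod hD)).subset ?_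
  rintro ⟨f1, f2, f3⟩ ⟨-, -, -, -, -, -, -, h, -⟩
  simp only [Lg] at h
  simp only [Set.mem_prod, Set.mem_ofPred_eq]
  split_ifs at h <;> omega

theorem finsum_flip {α : Type} (S : Set α) (F : α → ℤ) (e : α ≃ α)
    (hS : ∀ t, e t ∈ S ↔ t ∈ S) (hF : ∀ t, F (e t) = - F t) :
    ∑ᶠ t ∈ S, F t = 0 := by
  have h : ∑ᶠ t ∈ S, F t = ∑ᶠ t ∈ S, - F t := by
    rw [← finsum_comp_equiv e]
    simp only [hS, hF]
  have h2 : ∑ᶠ t ∈ S, - F t = - ∑ᶠ t ∈ S, F t := by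
    rw [← finsum_neg_distrib]
    refine finsum_congr fun t => ?_
    rw [← finsum_neg_distrib]
  omega

/-- scaling equivalence on polynomials -/
noncomputable def scaleE {Fq : Type} [Field Fq] (a : Fq) (ha : a ≠ 0) : Fq[X] ≃ Fq[X] where
  toFun p := C a * p
  invFun p := C a⁻¹ * p
  left_inv p := by beta_reduce; rw [← mul_assoc, ← C_mul, inv_mul_cancel₀ ha]; simp
  right_inv p := by beta_reduce; rw [← mul_assoc, ← C_mul, mul_inv_cancel₀ ha]; simp

theorem isUnit_Ca {Fq : Type} [Field Fq] {a : Fq} (ha : a ≠ 0) : IsUnit (C a) :=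
  Polynomial.isUnit_C.mpr ha.isUnit

theorem sqf_scale {Fq : Type} [Field Fq] {a : Fq} (ha : a ≠ 0) (p : Fq[X]) :
    Squarefree (C a * p) ↔ Squarefree p := by
  have h : Associated (C a * p) p := (associated_isUnit_mul_left_iff (isUnit_Ca ha)).mpr (by rfl)
  exact h.squarefree_iff

theorem mem_scale1 {Fq : Type} [Field Fq] {a : Fq} (ha : a ≠ 0) (g : ℕ) (f1 f2 f3 : Fq[X]) :
    (C a * f1, f2, f3) ∈ FhatSet Fq g ↔ (f1, f2, f3) ∈ FhatSet Fq g := by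
  simp only [FhatSet, Set.mem_ofPred_eq, sqf_scale ha, natDegree_C_mul ha,
    isCoprime_mul_unit_left_left (isUnit_Ca ha)]

theorem mem_scale2 {Fq : Type} [Field Fq] {a : Fq} (ha : a ≠ 0) (g : ℕ) (f1 f2 f3 : Fq[X]) :
    (f1, C a * f2, f3) ∈ FhatSet Fq g ↔ (f1, f2, f3) ∈ FhatSet Fq g := by
  simp only [FhatSet, Set.mem_ofPred_eq, sqf_scale ha, natDegree_C_mul ha,
    isCoprime_mul_unit_left_left (isUnit_Ca ha), isCoprime_mul_unit_left_right (isUnit_Ca ha)]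

/-- for odd `n`, for every `x ∈ F_{q^n}`, the sum over `F̂_g` of
`χ₂((f1f3)(x)) + χ₂((f2f3)(x)) + χ₂((f1f2)(x))` vanishes. -/
theorem stmt0 (q : ℕ) (hq_odd : Odd q) (hq_pp : IsPrimePow q)
    (n : ℕ) (hn_pos : 0 < n) (hn_odd : Odd n)
    (Fq : Type) [Field Fq] [Fintype Fq] (hFq : Fintype.card Fq = q)
    (K : Type) [Field K] [Fintype K] [Algebra Fq K] (hK : Fintype.card K = q ^ n)
    (g : ℕ) (hg : 1 ≤ g) (x : K) :
    (∑ᶠ t ∈ FhatSet Fq g,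
        (quadCharFn K (aeval x (t.1 * t.2.2)) + quadCharFn K (aeval x (t.2.1 * t.2.2)) +
          quadCharFn K (aeval x (t.1 * t.2.1)))) = 0 := by
  have hchar : ringChar Fq ≠ 2 := by
    intro h
    have := FiniteField.even_card_of_char_two h
    rw [hFq] at this
    rcases hq_odd with ⟨m, hm⟩
    omega
  obtain ⟨a, ha⟩ := FiniteField.exists_nonsquare hchar
  have haK := nonsq_ext (K := K) n hn_odd (by rw [hK, hFq]) ha
  have ha0 : a ≠ 0 := by
    rintro rfl
    exact ha IsSquare.zero
  have hfin := fhat_finite Fq g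
  let e1 : (Fq[X] × Fq[X] × Fq[X]) ≃ (Fq[X] × Fq[X] × Fq[X]) :=
    Equiv.prodCongr (scaleE a ha0) (Equiv.refl _)
  let e2 : (Fq[X] × Fq[X] × Fq[X]) ≃ (Fq[X] × Fq[X] × Fq[X]) :=
    Equiv.prodCongr (Equiv.refl _) (Equiv.prodCongr (scaleE a ha0) (Equiv.refl _))
  have he1 : ∀ t, e1 t = (C a * t.1, t.2.1, t.2.2) := fun t => rfl
  have he2 : ∀ t, e2 t = (t.1, C a * t.2.1, t.2.2) := fun t => rfl
  have hm1 : ∀ t, e1 t ∈ FhatSet Fq g ↔ t ∈ FhatSet Fq g := fun t => mem_scale1 ha0 g _ _ _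
  have hm2 : ∀ t, e2 t ∈ FhatSet Fq g ↔ t ∈ FhatSet Fq g := fun t => mem_scale2 ha0 g _ _ _
  rw [finsum_mem_add_distrib hfin, finsum_mem_add_distrib hfin,
    finsum_flip _ _ e1 hm1, finsum_flip _ _ e2 hm2, finsum_flip _ _ e1 hm1]
  · rfl
  · intro t
    rw [he1, mul_assoc, map_mul, aeval_C, qc_neg haK]
  · intro t
    rw [he2, mul_assoc, map_mul, aeval_C, qc_neg haK]
  · intro t
    rw [he1, mul_assoc, map_mul, aeval_C, qc_neg haK]
end

section
/- Let q be an odd prime power, let n be an even positive integer, and let χ_2 be the quadratic character of the finite field F_{q^n}. Then for every integer g ≥ 1 and every x ∈ F_{q^n}, the sum over all triples (f1, f2, f3) ∈ F̂_g of χ_2((f1·f3)(x)) + χ_2((f2·f3)(x)) + χ_2((f1·f2)(x)) equals 3·(q−1)^2 times the sum over all triples (f1, f2, f3) ∈ F_g of χ_2((f1·f2)(x)). -/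
open Polynomial Classical

lemma Lg_swap12 (a b c : ℕ) : Lg a b c = Lg b a c := by
  unfold Lg
  have h : (Even (a + c) ∧ Even (b + c)) ↔ (Even (b + c) ∧ Even (a + c)) := and_comm
  simp only [h]
  split_ifs <;> omega

lemma Lg_swap23 (a b c : ℕ) : Lg a b c = Lg a c b := by
  unfold Lg
  have h : (Even (a + c) ∧ Even (b + c)) ↔ (Even (a + b) ∧ Even (c + b)) := by
    simp only [Nat.even_add]; tauto
  simp only [h]
  split_ifs <;> omega

lemma FSet_swap12 {F : Type*} [Field F] {g : ℕ} {a b c : F[X]}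
    (h : (a, b, c) ∈ FSet F g) : (b, a, c) ∈ FSet F g := by
  obtain ⟨⟨h1, h2, h3, h12, h13, h23, hm, hL, hA, hB⟩, hm1, hm2⟩ := h
  refine ⟨⟨h2, h1, h3, h12.symm, h23, h13, hm, ?_, ?_, ?_⟩, hm2, hm1⟩
  · rw [← hL]; exact Lg_swap12 _ _ _
  · intro h; apply hA; rw [← h]; exact Multiset.cons_swap _ _ _
  · intro h; apply hB; rw [← h]; exact Multiset.cons_swap _ _ _

lemma FSet_swap23 {F : Type*} [Field F] {g : ℕ} {a b c : F[X]}
    (h : (a, b, c) ∈ FSet F g) : (a, c, b) ∈ FSet F g := by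
  obtain ⟨⟨h1, h2, h3, h12, h13, h23, hm, hL, hA, hB⟩, hm1, hm2⟩ := h
  refine ⟨⟨h1, h3, h2, h13, h12, h23.symm, hm2, ?_, ?_, ?_⟩, hm1, hm⟩
  · rw [← hL]; exact Lg_swap23 _ _ _
  · intro h; apply hA; rw [← h]
    exact congrArg (Multiset.cons _) (Multiset.cons_swap _ _ 0)
  · intro h; apply hB; rw [← h]
    exact congrArg (Multiset.cons _) (Multiset.cons_swap _ _ 0)

lemma FSet_finite (F : Type*) [Field F] [Fintype F] (g : ℕ) : (FSet F g).Finite := by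
  have hfin : {p : F[X] | p.natDegree ≤ g + 3}.Finite := by
    refine Set.Finite.of_injOn (f := fun (p : F[X]) (i : Fin (g + 4)) => p.coeff i)
      (t := Set.univ) (fun _ _ => Set.mem_univ _) ?_ Set.finite_univ
    intro p hp r hr h
    simp only [Set.mem_ofPred_eq] at hp hr
    ext i
    by_cases hi : i < g + 4
    · exact congrFun h ⟨i, hi⟩
    · rw [coeff_eq_zero_of_natDegree_lt (by omega), coeff_eq_zero_of_natDegree_lt (by omega)]
  refine (hfin.prod (hfin.prod hfin)).subset ?_
  rintro ⟨a, b, c⟩ ⟨⟨-, -, -, -, -, -, -, hL, -, -⟩, -, -⟩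
  simp only [Set.mem_prod, Set.mem_ofPred_eq]
  simp only [Lg] at hL
  split_ifs at hL <;> omega

lemma Fhat_scale {F : Type*} [Field F] {g : ℕ} {a b c : F[X]} {u v : F} (hu : u ≠ 0) (hv : v ≠ 0)
    (h : (a, b, c) ∈ FhatSet F g) : (C u * a, C v * b, c) ∈ FhatSet F g := by
  obtain ⟨h1, h2, h3, h12, h13, h23, hm, hL, hA, hB⟩ := h
  have hu' : IsUnit (C u) := isUnit_C.2 hu.isUnit
  have hv' : IsUnit (C v) := isUnit_C.2 hv.isUnit
  have s1 : Squarefree (C u * a) :=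
    h1.squarefree_of_dvd ((hu'.mul_left_dvd).2 dvd_rfl)
  have s2 : Squarefree (C v * b) :=
    h2.squarefree_of_dvd ((hv'.mul_left_dvd).2 dvd_rfl)
  refine ⟨s1, s2, h3, ?_, ?_, ?_, hm, ?_, ?_, ?_⟩
  · exact (isCoprime_mul_unit_left_left hu' _ _).2 ((isCoprime_mul_unit_left_right hv' _ _).2 h12)
  · exact (isCoprime_mul_unit_left_left hu' _ _).2 h13
  · exact (isCoprime_mul_unit_left_left hv' _ _).2 h23
  · simpa only [natDegree_C_mul hu, natDegree_C_mul hv] using hL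
  · simpa only [natDegree_C_mul hu, natDegree_C_mul hv] using hA
  · simpa only [natDegree_C_mul hu, natDegree_C_mul hv] using hB

lemma quadCharFn_mul_sq {K : Type*} [Field K] {s : K} (hs : s ≠ 0) (h : IsSquare s) (a : K) :
    quadCharFn K (s * a) = quadCharFn K a := by
  have h2 : IsSquare (s * a) ↔ IsSquare a := by
    refine ⟨fun h' => ?_, fun h' => h.mul h'⟩
    have := h'.div h
    rwa [mul_div_cancel_left₀ _ hs] at this
  simp only [quadCharFn, mul_eq_zero, hs, false_or, h2]

lemma isSquare_base {q n : ℕ} (hq_odd : Odd q) (hn_even : Even n)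
    {F : Type} [Field F] [Fintype F] (hF : Fintype.card F = q)
    {K : Type} [Field K] [Fintype K] [Algebra F K] (hK : Fintype.card K = q ^ n)
    {c : F} (hc : c ≠ 0) : IsSquare (algebraMap F K c) := by
  obtain ⟨m, rfl⟩ := hn_even
  have hchar : ringChar K ≠ 2 := by
    intro h
    have := FiniteField.even_card_iff_char_two.1 h
    rw [hK, ← Nat.even_iff] at this
    exact (Nat.not_even_iff_odd.2 (hq_odd.pow)) this
  have hc' : algebraMap F K c ≠ 0 := by simpa using hc
  rw [FiniteField.isSquare_iff hchar hc', hK, ← map_pow]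
  obtain ⟨k, hk⟩ : Odd (q ^ m) := hq_odd.pow
  have e : q ^ (m + m) / 2 = (q ^ m - 1) * (k + 1) := by
    rw [pow_add, hk, Nat.add_sub_cancel]
    have : (2 * k + 1) * (2 * k + 1) = 2 * (2 * k * (k + 1)) + 1 := by ring
    omega
  have h1 : c ^ (q ^ m - 1) = 1 := by
    have h := FiniteField.pow_card_pow m c
    rw [hF] at h
    have h3 : c ^ (q ^ m - 1) * c = 1 * c := by
      rw [← pow_succ, Nat.sub_add_cancel (by omega), h, one_mul]
    exact mul_right_cancel₀ hc h3
  rw [e, pow_mul, h1, one_pow, map_one]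

/-- for even `n`, for every `x ∈ F_{q^n}`, the sum over `F̂_g` of
`χ₂((f1f3)(x)) + χ₂((f2f3)(x)) + χ₂((f1f2)(x))` equals `3(q-1)²` times the sum over `F_g`
of `χ₂((f1f2)(x))`. -/
theorem stmt2 (q : ℕ) (hq_odd : Odd q) (hq_pp : IsPrimePow q)
    (n : ℕ) (hn_pos : 0 < n) (hn_even : Even n)
    (Fq : Type) [Field Fq] [Fintype Fq] (hFq : Fintype.card Fq = q)
    (K : Type) [Field K] [Fintype K] [Algebra Fq K] (hK : Fintype.card K = q ^ n)
    (g : ℕ) (hg : 1 ≤ g) (x : K) :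
    (∑ᶠ t ∈ FhatSet Fq g,
        (quadCharFn K (aeval x (t.1 * t.2.2)) + quadCharFn K (aeval x (t.2.1 * t.2.2)) +
          quadCharFn K (aeval x (t.1 * t.2.1)))) =
      3 * ((q : ℤ) - 1) ^ 2 * ∑ᶠ t ∈ FSet Fq g, quadCharFn K (aeval x (t.1 * t.2.1)) := by
  have hfin := FSet_finite Fq g
  set S := hfin.toFinset with hS
  have hmem : ∀ t, t ∈ S ↔ t ∈ FSet Fq g := fun t => hfin.mem_toFinset
  have hSc : FSet Fq g = (S : Set _) := hfin.coe_toFinset.symm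
  let φ : (Fqˣ × Fqˣ) × (Fq[X] × Fq[X] × Fq[X]) → Fq[X] × Fq[X] × Fq[X] :=
    fun p => (C (p.1.1 : Fq) * p.2.1, C (p.1.2 : Fq) * p.2.2.1, p.2.2.2)
  let T : Finset ((Fqˣ × Fqˣ) × (Fq[X] × Fq[X] × Fq[X])) := Finset.univ ×ˢ S
  have key : ∀ {u v : Fqˣ} {a b : Fq[X]}, a.Monic → b.Monic →
      C (u : Fq) * a = C (v : Fq) * b → u = v ∧ a = b := by
    intro u v a b ha hb h
    have h1 := congrArg leadingCoeff h
    rw [leadingCoeff_mul, leadingCoeff_mul, ha.leadingCoeff, hb.leadingCoeff,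
      leadingCoeff_C, leadingCoeff_C, mul_one, mul_one] at h1
    refine ⟨Units.ext h1, ?_⟩
    rw [h1] at h
    exact mul_left_cancel₀ (C_ne_zero.2 v.ne_zero) h
  have hinj : Set.InjOn φ T := by
    rintro ⟨⟨u, v⟩, a, b, c⟩ h1 ⟨⟨u', v'⟩, a', b', c'⟩ h2 h
    simp only [T, Finset.coe_product, Finset.coe_univ, Set.mem_prod, Set.mem_univ, true_and,
      Finset.mem_coe, hmem] at h1 h2
    simp only [φ, Prod.mk.injEq] at h
    obtain ⟨e1, e2, e3⟩ := h
    obtain ⟨rfl, rfl⟩ := key h1.2.1 h2.2.1 e1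
    obtain ⟨rfl, rfl⟩ := key h1.2.2 h2.2.2 e2
    rw [e3]
  have hnorm : ∀ {a : Fq[X]}, Squarefree a → ∃ (u : Fqˣ), (C ((u⁻¹ : Fqˣ) : Fq) * a).Monic := by
    intro a ha
    have h0 : a.leadingCoeff ≠ 0 := leadingCoeff_ne_zero.2 ha.ne_zero
    refine ⟨Units.mk0 _ h0, ?_⟩
    rw [Monic, leadingCoeff_mul, leadingCoeff_C]
    simp [h0]
  have himg : FhatSet Fq g = ((T.image φ : Finset _) : Set _) := by
    ext ⟨a, b, c⟩
    simp only [Finset.coe_image, Set.mem_image, Finset.mem_coe]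
    constructor
    · intro h
      obtain ⟨u, hu⟩ := hnorm h.1
      obtain ⟨v, hv⟩ := hnorm h.2.1
      refine ⟨((u, v), (C ((u⁻¹ : Fqˣ) : Fq) * a, C ((v⁻¹ : Fqˣ) : Fq) * b, c)), ?_, ?_⟩
      · simp only [T, Finset.mem_product, Finset.mem_univ, true_and, hmem]
        exact ⟨Fhat_scale (Units.ne_zero _) (Units.ne_zero _) h, hu, hv⟩
      · simp only [φ, ← mul_assoc, ← C_mul, Units.mul_inv, C_1, one_mul]
    · rintro ⟨⟨⟨u, v⟩, a', b', c'⟩, h1, h2⟩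
      simp only [T, Finset.mem_product, Finset.mem_univ, true_and, hmem] at h1
      rw [← h2]
      exact Fhat_scale u.ne_zero v.ne_zero h1.1
  have hsq : ∀ (u : Fqˣ) (y : K), quadCharFn K (algebraMap Fq K u * y) = quadCharFn K y := by
    intro u y
    exact quadCharFn_mul_sq (by simp) (isSquare_base hq_odd hn_even hFq hK u.ne_zero) y
  rw [himg, finsum_mem_coe_finset, Finset.sum_image hinj, hSc, finsum_mem_coe_finset]
  have hterm : ∀ p ∈ T, (quadCharFn K (aeval x ((φ p).1 * (φ p).2.2))
      + quadCharFn K (aeval x ((φ p).2.1 * (φ p).2.2)) +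
          quadCharFn K (aeval x ((φ p).1 * (φ p).2.1))) =
      quadCharFn K (aeval x (p.2.1 * p.2.2.2)) + quadCharFn K (aeval x (p.2.2.1 * p.2.2.2)) +
          quadCharFn K (aeval x (p.2.1 * p.2.2.1)) := by
    rintro ⟨⟨u, v⟩, a, b, c⟩ -
    simp only [φ, map_mul, aeval_C]
    rw [mul_assoc, mul_assoc, mul_mul_mul_comm, mul_assoc (algebraMap Fq K u)]
    simp only [hsq]
  rw [Finset.sum_congr rfl hterm, Finset.sum_product]
  simp only [Finset.sum_const, Finset.sum_add_distrib]
  have e23 : ∑ t ∈ S, quadCharFn K (aeval x (t.1 * t.2.2)) =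
      ∑ t ∈ S, quadCharFn K (aeval x (t.1 * t.2.1)) := by
    refine Finset.sum_nbij' (fun t => (t.1, t.2.2, t.2.1)) (fun t => (t.1, t.2.2, t.2.1))
      ?_ ?_ ?_ ?_ ?_
    · intro t ht; exact (hmem _).2 (FSet_swap23 ((hmem _).1 ht))
    · intro t ht; exact (hmem _).2 (FSet_swap23 ((hmem _).1 ht))
    · intro t _; rfl
    · intro t _; rfl
    · intro t _; rfl
  have e12 : ∑ t ∈ S, quadCharFn K (aeval x (t.2.1 * t.2.2)) =
      ∑ t ∈ S, quadCharFn K (aeval x (t.1 * t.2.2)) := by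
    refine Finset.sum_nbij' (fun t => (t.2.1, t.1, t.2.2)) (fun t => (t.2.1, t.1, t.2.2))
      ?_ ?_ ?_ ?_ ?_
    · intro t ht; exact (hmem _).2 (FSet_swap12 ((hmem _).1 ht))
    · intro t ht; exact (hmem _).2 (FSet_swap12 ((hmem _).1 ht))
    · intro t _; rfl
    · intro t _; rfl
    · intro t _; rfl
  rw [e12, e23]
  have hcard : ((Fintype.card Fqˣ : ℕ) : ℤ) = (q : ℤ) - 1 := by
    rw [Fintype.card_units, hFq, Nat.cast_sub hq_odd.pos]; simp
  simp only [Finset.card_univ, Fintype.card_prod, nsmul_eq_mul, Nat.cast_mul, hcard]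
  ring
end

section
/- Let q be an odd prime power, let n be a positive integer, let χ_2 be the quadratic character of F_{q^n}, and let F ∈ F_q[X]. Then the sum of χ_2(F(x)) over all x ∈ F_{q^n} whose minimal polynomial over F_q has degree exactly n equals n times the sum of χ_P(F) over all monic irreducible polynomials P ∈ F_q[X] of degree n. -/
open Polynomial Classical

theorem stmt5_aux_surj {Fq K : Type} [Field Fq] [Field K] [Algebra Fq K] [FiniteDimensional Fq K]
    (x : K) (hx : (minpoly Fq x).natDegree = Module.finrank Fq K) :
    Function.Surjective (aeval x : Fq[X] →ₐ[Fq] K) := by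
  have h1 : IntermediateField.adjoin Fq {x} = ⊤ :=
    (Field.primitive_element_iff_minpoly_natDegree_eq Fq x).2 hx
  have h2 : Algebra.adjoin Fq {x} = ⊤ := by
    rw [← IntermediateField.adjoin_simple_toSubalgebra_of_isAlgebraic
      (Algebra.IsAlgebraic.isAlgebraic x), h1]
    rfl
  rw [Algebra.adjoin_singleton_eq_range_aeval] at h2
  exact AlgHom.range_eq_top _ |>.1 h2

theorem stmt5_aux_chi {Fq K : Type} [Field Fq] [Field K] [Algebra Fq K] [FiniteDimensional Fq K]
    (x : K) (hx : (minpoly Fq x).natDegree = Module.finrank Fq K) (F : Fq[X]) :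
    quadCharFn K (aeval x F) = chiP (minpoly Fq x) F := by
  have hs := stmt5_aux_surj x hx
  have h1 : IsSquare (aeval x F) ↔ ∃ G, minpoly Fq x ∣ F - G ^ 2 := by
    simp only [minpoly.dvd_iff, map_sub, map_pow, sub_eq_zero]
    rw [isSquare_iff_exists_sq]
    constructor
    · rintro ⟨r, hr⟩
      obtain ⟨G, rfl⟩ := hs r
      exact ⟨G, hr⟩
    · rintro ⟨G, hG⟩
      exact ⟨_, hG⟩
  unfold quadCharFn chiP
  simp only [h1, minpoly.dvd_iff]

theorem stmt5_aux_card {Fq K : Type} [Field Fq] [Fintype Fq] [Field K] [Fintype K] [Algebra Fq K]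
    (P : Fq[X]) (hm : P.Monic) (hi : Irreducible P) (hd : P.natDegree = Module.finrank Fq K) :
    (Finset.univ.filter (fun x : K => minpoly Fq x = P)).card = P.natDegree := by
  have : Fact (Irreducible P) := ⟨hi⟩
  have hP0 := hi.ne_zero
  have : FiniteDimensional Fq (AdjoinRoot P) := (AdjoinRoot.powerBasis hP0).finite
  have hfr : Module.finrank Fq (AdjoinRoot P) = P.natDegree := by
    rw [(AdjoinRoot.powerBasis hP0).finrank, AdjoinRoot.powerBasis_dim]
  have : Finite (AdjoinRoot P) := Module.finite_of_finite Fq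
  obtain ⟨φ⟩ : Nonempty (AdjoinRoot P →ₐ[Fq] K) :=
    FiniteField.nonempty_algHom_of_finrank_dvd (by rw [hfr, hd])
  have key : ∀ x : K, minpoly Fq x = P ↔ aeval x P = 0 := by
    intro x
    constructor
    · rintro rfl; exact minpoly.aeval _ _
    · intro h; exact (minpoly.eq_of_irreducible_of_monic hi h hm).symm
  have hroot : minpoly Fq (φ (AdjoinRoot.root P)) = P := by
    rw [key, Polynomial.aeval_algHom_apply]; simp
  have hsp : (P.map (algebraMap Fq K)).Splits := by
    rw [← hroot]; exact Normal.splits inferInstance _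
  have hsep : P.Separable := PerfectField.separable_of_irreducible hi
  rw [← Polynomial.card_rootSet_eq_natDegree hsep hsp, ← Set.toFinset_card]
  congr 1
  ext x
  simp [key, Polynomial.mem_rootSet, hP0]

/-- the sum of `χ₂(F(x))` over the `x ∈ F_{q^n}` of degree exactly `n` over
`F_q` equals `n` times the sum of `χ_P(F)` over monic irreducible `P` of degree `n`. -/
theorem stmt5 (q : ℕ) (hq_odd : Odd q) (hq_pp : IsPrimePow q)
    (n : ℕ) (hn : 0 < n)
    (Fq : Type) [Field Fq] [Fintype Fq] (hFq : Fintype.card Fq = q)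
    (K : Type) [Field K] [Fintype K] [Algebra Fq K] (hK : Fintype.card K = q ^ n)
    (F : Fq[X]) :
    (∑ᶠ x ∈ {x : K | (minpoly Fq x).natDegree = n}, quadCharFn K (aeval x F)) =
      n * ∑ᶠ P ∈ {P : Fq[X] | P.Monic ∧ Irreducible P ∧ P.natDegree = n}, chiP P F := by
  have hfin : Module.finrank Fq K = n := by
    have h := Module.card_eq_pow_finrank (K := Fq) (V := K)
    rw [hK, hFq] at h
    exact (Nat.pow_right_injective hq_pp.two_le h).symm
  set S : Finset K := Finset.univ.filter (fun x : K => (minpoly Fq x).natDegree = n) with hS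
  have hS' : {x : K | (minpoly Fq x).natDegree = n} = (S : Set K) := by
    ext x; simp [hS]
  have hT : {P : Fq[X] | P.Monic ∧ Irreducible P ∧ P.natDegree = n} =
      ((S.image (minpoly Fq) : Finset Fq[X]) : Set Fq[X]) := by
    ext P
    simp only [Set.mem_setOf_eq, Finset.coe_image, Set.mem_image, Finset.mem_coe, hS,
      Finset.mem_filter, Finset.mem_univ, true_and]
    constructor
    · rintro ⟨hm, hi, hd⟩
      have hc := stmt5_aux_card (K := K) P hm hi (hd.trans hfin.symm)
      rw [hd] at hc
      obtain ⟨x, hx⟩ := Finset.card_pos.1 (hc ▸ hn)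
      have hx' : minpoly Fq x = P := by simpa using hx
      exact ⟨x, by rw [hx', hd], hx'⟩
    · rintro ⟨x, hx, rfl⟩
      have hint : IsIntegral Fq x := Algebra.IsIntegral.isIntegral x
      exact ⟨minpoly.monic hint, minpoly.irreducible hint, hx⟩
  rw [hS', finsum_mem_coe_finset]
  have hT2 := hT
  rw [hT, finsum_mem_coe_finset, Finset.mul_sum,
    ← Finset.sum_fiberwise_of_maps_to (g := minpoly Fq) (t := S.image (minpoly Fq))
      (fun x hx => Finset.mem_image_of_mem _ hx)]
  refine Finset.sum_congr rfl fun P hP => ?_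
  have hP' : P ∈ {P : Fq[X] | P.Monic ∧ Irreducible P ∧ P.natDegree = n} := by
    rw [hT2]; exact hP
  obtain ⟨hm, hi, hd⟩ := hP'
  have hc := stmt5_aux_card (K := K) P hm hi (hd.trans hfin.symm)
  have hf : S.filter (fun x => minpoly Fq x = P) =
      Finset.univ.filter (fun x : K => minpoly Fq x = P) := by
    ext x
    simp only [hS, Finset.mem_filter, Finset.mem_univ, true_and, and_iff_right_iff_imp]
    rintro rfl; exact hd
  rw [hf, Finset.sum_congr rfl (g := fun _ => chiP P F), Finset.sum_const, hc, hd, nsmul_eq_mul]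
  intro x hx
  have hx' : minpoly Fq x = P := by simpa using hx
  rw [← hx']
  exact stmt5_aux_chi x (by rw [hx', hd, hfin]) F
end

section
/- Let q be an odd prime power, let P ∈ F_q[X] be monic irreducible, and let k1, k2 ∈ {0, 1}. For d ≥ 0 define N_{k1,k2}(d; P) as the sum of χ_P(f1·f2) over all triples (f1, f2, f3) of monic polynomials in F_q[X] such that f1·f2·f3 is square-free of degree d, deg(f1·f3) ≡ k1 (mod 2), and deg(f2·f3) ≡ k2 (mod 2). Then there exist real constants C_even and C_odd (depending on P, k1, k2) such that for every ε > 0 there is a constant C_ε with |N_{k1,k2}(d; P) − (C_{parity(d)}/4)·q^d| ≤ C_ε · q^{(1/2 + ε)d} for all d ≥ 0, where C_{parity(d)} is C_even for d even and C_odd for d odd. -/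
open Polynomial Classical

noncomputable section

/-- `N_{k1,k2}(d;P)`: the sum of `χ_P(f1·f2)` over triples of monic polynomials with
`f1·f2·f3` square-free of degree `d`, `deg(f1·f3) ≡ k1 (mod 2)` and
`deg(f2·f3) ≡ k2 (mod 2)`. -/
def Nk {Fq : Type*} [Field Fq] (k1 k2 d : ℕ) (P : Fq[X]) : ℤ :=
  ∑ᶠ t ∈ {t : Fq[X] × Fq[X] × Fq[X] |
      t.1.Monic ∧ t.2.1.Monic ∧ t.2.2.Monic ∧
      Squarefree (t.1 * t.2.1 * t.2.2) ∧ (t.1 * t.2.1 * t.2.2).natDegree = d ∧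
      (t.1 * t.2.2).natDegree % 2 = k1 ∧ (t.2.1 * t.2.2).natDegree % 2 = k2},
    chiP P (t.1 * t.2.1)

end


namespace Pf

/-- Generating series of a weighted graded set. -/
noncomputable def gen {Y : Type*} (A : Set Y) (dg : Y → ℕ) (w : Y → ℝ) : PowerSeries ℝ :=
  PowerSeries.mk fun d => ∑ᶠ x ∈ {x | x ∈ A ∧ dg x = d}, w x

lemma gen_union {Y : Type*} {A B : Set Y} {dg : Y → ℕ} {w : Y → ℝ} (hd : Disjoint A B)
    (hA : ∀ d, {x | x ∈ A ∧ dg x = d}.Finite) (hB : ∀ d, {x | x ∈ B ∧ dg x = d}.Finite) :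
    gen (A ∪ B) dg w = gen A dg w + gen B dg w := by
  ext d
  simp only [gen, PowerSeries.coeff_mk, map_add]
  rw [← finsum_mem_union _ (hA d) (hB d)]
  · refine finsum_mem_congr ?_ (fun _ _ => rfl)
    ext x; simp [or_and_right]
  · rw [Set.disjoint_left] at hd ⊢
    rintro x ⟨h1, _⟩ ⟨h2, _⟩
    exact hd h1 h2

lemma gen_image {Y : Type*} {A : Set Y} {dg : Y → ℕ} {w : Y → ℝ} (φ : Y → Y) (n : ℕ) (c : ℝ)
    (hi : Set.InjOn φ A) (hdg : ∀ x ∈ A, dg (φ x) = dg x + n) (hw : ∀ x ∈ A, w (φ x) = c * w x) :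
    gen (φ '' A) dg w = gen A dg w * (PowerSeries.C c * PowerSeries.X ^ n) := by
  ext d
  rw [show gen A dg w * (PowerSeries.C c * PowerSeries.X ^ n) =
    PowerSeries.C c * (PowerSeries.X ^ n * gen A dg w) by ring, PowerSeries.coeff_C_mul,
    PowerSeries.coeff_X_pow_mul']
  simp only [gen, PowerSeries.coeff_mk]
  split_ifs with h
  · rw [mul_finsum_mem]
    have : {x | x ∈ φ '' A ∧ dg x = d} = φ '' {x | x ∈ A ∧ dg x = d - n} := by
      ext x
      constructor
      · rintro ⟨⟨y, hy, rfl⟩, hx⟩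
        refine ⟨y, ⟨hy, ?_⟩, rfl⟩
        have := hdg y hy
        omega
      · rintro ⟨y, ⟨hy, hx⟩, rfl⟩
        refine ⟨⟨y, hy, rfl⟩, ?_⟩
        have := hdg y hy
        omega
    rw [this, finsum_mem_image (hi.mono (fun x hx => hx.1))]
    exact finsum_mem_congr rfl (fun x hx => hw x hx.1)
  · have : {x | x ∈ φ '' A ∧ dg x = d} = ∅ := by
      ext x
      simp only [Set.mem_ofPred_eq, Set.mem_empty_iff_false, iff_false]
      rintro ⟨⟨y, hy, rfl⟩, hx⟩
      have := hdg y hy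
      omega
    rw [this]; simp

/-- weighted absolute partial sums bounded by `A` -/
def Bd (f : PowerSeries ℝ) (t A : ℝ) : Prop :=
  ∀ N, ∑ i ∈ Finset.range N, |PowerSeries.coeff i f| * t ^ i ≤ A

lemma Bd.nonneg {f : PowerSeries ℝ} {t A : ℝ} (h : Bd f t A) : 0 ≤ A := by simpa using h 0

lemma Bd.summable {f : PowerSeries ℝ} {t A : ℝ} (ht : 0 ≤ t) (h : Bd f t A) :
    Summable (fun i => |PowerSeries.coeff i f| * t ^ i) :=
  summable_of_sum_range_le (fun _ => by positivity) h

lemma Bd.tsum_le {f : PowerSeries ℝ} {t A : ℝ} (ht : 0 ≤ t) (h : Bd f t A) :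
    ∑' i, |PowerSeries.coeff i f| * t ^ i ≤ A :=
  (h.summable ht).tsum_le_of_sum_range_le h

lemma Bd.mul {f g : PowerSeries ℝ} {t A B : ℝ} (ht : 0 ≤ t) (hf : Bd f t A) (hg : Bd g t B) :
    Bd (f * g) t (A * B) := by
  intro N
  have sf := hf.summable ht
  have sg := hg.summable ht
  have sf' : Summable (fun i => ‖|PowerSeries.coeff i f| * t ^ i‖) := sf.norm
  have sg' : Summable (fun i => ‖|PowerSeries.coeff i g| * t ^ i‖) := sg.norm
  have key := tsum_mul_tsum_eq_tsum_sum_antidiagonal_of_summable_norm sf' sg'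
  have ss := (summable_norm_sum_mul_antidiagonal_of_summable_norm sf' sg').of_norm
  calc _ ≤ ∑ n ∈ Finset.range N, ∑ kl ∈ Finset.HasAntidiagonal.antidiagonal n,
        (|PowerSeries.coeff kl.1 f| * t ^ kl.1) * (|PowerSeries.coeff kl.2 g| * t ^ kl.2) := by
        refine Finset.sum_le_sum fun n _ => ?_
        rw [PowerSeries.coeff_mul]
        refine (mul_le_mul_of_nonneg_right (Finset.abs_sum_le_sum_abs _ _) (by positivity)).trans ?_
        rw [Finset.sum_mul]
        refine Finset.sum_le_sum fun kl hkl => ?_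
        rw [Finset.HasAntidiagonal.mem_antidiagonal] at hkl
        rw [← hkl, pow_add, abs_mul]
        apply le_of_eq; ring
    _ ≤ _ := ss.sum_le_tsum _ (fun n _ => Finset.sum_nonneg fun kl _ => by positivity)
    _ = _ := key.symm
    _ ≤ A * B := mul_le_mul (hf.tsum_le ht) (hg.tsum_le ht)
        (tsum_nonneg fun _ => by positivity) hf.nonneg

lemma Bd.add {f g : PowerSeries ℝ} {t A B : ℝ} (ht : 0 ≤ t) (hf : Bd f t A) (hg : Bd g t B) :
    Bd (f + g) t (A + B) := by
  intro N
  refine le_trans ?_ (add_le_add (hf N) (hg N))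
  rw [← Finset.sum_add_distrib]
  refine Finset.sum_le_sum fun n _ => ?_
  rw [← add_mul, map_add]
  exact mul_le_mul_of_nonneg_right (abs_add_le _ _) (by positivity)

lemma Bd.mono {f : PowerSeries ℝ} {t A B : ℝ} (hf : Bd f t A) (h : A ≤ B) : Bd f t B :=
  fun N => (hf N).trans h

lemma Bd.one {t : ℝ} (ht : 0 ≤ t) : Bd 1 t 1 := by
  intro N
  have : ∀ i ∈ Finset.range N, |PowerSeries.coeff i (1 : PowerSeries ℝ)| * t ^ i =
      if i = 0 then 1 else 0 := by
    intro i _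
    rw [PowerSeries.coeff_one]
    split_ifs with h <;> simp [h]
  rw [Finset.sum_congr rfl this, Finset.sum_ite_eq']
  split_ifs <;> norm_num

lemma Bd.mon {t c : ℝ} (ht : 0 ≤ t) (n : ℕ) :
    Bd (PowerSeries.C c * PowerSeries.X ^ n) t (|c| * t ^ n) := by
  intro N
  have : ∀ i ∈ Finset.range N, |PowerSeries.coeff i (PowerSeries.C c * PowerSeries.X ^ n : PowerSeries ℝ)| * t ^ i =
      if i = n then |c| * t ^ n else 0 := by
    intro i _
    rw [PowerSeries.coeff_C_mul, PowerSeries.coeff_X_pow]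
    split_ifs with h <;> simp [h]
  rw [Finset.sum_congr rfl this, Finset.sum_ite_eq']
  split_ifs
  · exact le_rfl
  · positivity

lemma Bd.prod {ι : Type*} (S : Finset ι) (f : ι → PowerSeries ℝ) (A : ι → ℝ) {t : ℝ} (ht : 0 ≤ t)
    (h : ∀ i ∈ S, Bd (f i) t (A i)) : Bd (∏ i ∈ S, f i) t (∏ i ∈ S, A i) := by
  induction S using Finset.induction_on with
  | empty => simpa using Bd.one ht
  | insert a s ha ih =>
    rw [Finset.prod_insert ha, Finset.prod_insert ha]
    exact (h a (Finset.mem_insert_self _ _)).mul ht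
      (ih fun i hi => h i (Finset.mem_insert_of_mem hi))

lemma Bd.of_poly (f : PowerSeries ℝ) (m : ℕ) (hm : ∀ i, m ≤ i → PowerSeries.coeff i f = 0) {t : ℝ}
    (ht : 0 ≤ t) : Bd f t (∑ i ∈ Finset.range m, |PowerSeries.coeff i f| * t ^ i) := by
  intro N
  have h1 : ∑ i ∈ Finset.range N, |PowerSeries.coeff i f| * t ^ i ≤
      ∑ i ∈ Finset.range (max N m), |PowerSeries.coeff i f| * t ^ i :=
    Finset.sum_le_sum_of_subset_of_nonneg (Finset.range_mono (le_max_left _ _))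
      (fun _ _ _ => by positivity)
  refine h1.trans (le_of_eq ?_)
  symm
  apply Finset.sum_subset (Finset.range_mono (le_max_right _ _))
  intro i _ hi
  rw [hm i (by simpa using hi)]; simp

/-- the local correction factor -/
noncomputable def loc (a b c : ℝ) (n : ℕ) : PowerSeries ℝ :=
  (1 + PowerSeries.C (a + b + c) * PowerSeries.X ^ n) * (1 - PowerSeries.C a * PowerSeries.X ^ n)
    * (1 - PowerSeries.C b * PowerSeries.X ^ n) * (1 - PowerSeries.C c * PowerSeries.X ^ n)

lemma Bd.loc {a b c t : ℝ} (n : ℕ) (ha : |a| ≤ 1) (hb : |b| ≤ 1) (hc : |c| ≤ 1) (ht : 0 ≤ t)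
    (ht1 : t ≤ 1) : Bd (loc a b c n) t (1 + 30 * t ^ (2 * n)) := by
  have e : Pf.loc a b c n = 1 +
      PowerSeries.C ((a*b+a*c+b*c) - (a+b+c)*(a+b+c)) * PowerSeries.X ^ (2 * n) +
      PowerSeries.C ((a+b+c) * (a*b+a*c+b*c) - a*b*c) * PowerSeries.X ^ (3 * n) +
      PowerSeries.C (-((a+b+c) * (a*b*c))) * PowerSeries.X ^ (4 * n) := by
    simp only [Pf.loc, map_add, map_sub, map_mul, map_neg, pow_mul']
    ring
  rw [e]
  refine ((((Bd.one ht).add ht (Bd.mon ht _)).add ht (Bd.mon ht _)).add ht (Bd.mon ht _)).mono ?_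
  have hab : |a*b| ≤ 1 := by rw [abs_mul]; exact mul_le_one₀ ha (abs_nonneg _) hb
  have hac : |a*c| ≤ 1 := by rw [abs_mul]; exact mul_le_one₀ ha (abs_nonneg _) hc
  have hbc : |b*c| ≤ 1 := by rw [abs_mul]; exact mul_le_one₀ hb (abs_nonneg _) hc
  have habc : |a*b*c| ≤ 1 := by rw [abs_mul]; exact mul_le_one₀ hab (abs_nonneg _) hc
  have h1 : |a+b+c| ≤ 3 := by
    rw [abs_le] at *; constructor <;> linarith
  have h2 : |a*b+a*c+b*c| ≤ 3 := by
    rw [abs_le] at *; constructor <;> linarith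
  have h11 : |(a+b+c)*(a+b+c)| ≤ 9 := by
    rw [abs_mul]; nlinarith [abs_nonneg (a+b+c)]
  have h12 : |(a+b+c)*(a*b+a*c+b*c)| ≤ 9 := by
    rw [abs_mul]; nlinarith [abs_nonneg (a+b+c), abs_nonneg (a*b+a*c+b*c)]
  have h13 : |-((a+b+c)*(a*b*c))| ≤ 3 := by
    rw [abs_neg, abs_mul]; nlinarith [abs_nonneg (a+b+c), abs_nonneg (a*b*c)]
  have k1 : |(a*b+a*c+b*c) - (a+b+c)*(a+b+c)| ≤ 12 := (abs_sub _ _).trans (by linarith)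
  have k2 : |(a+b+c) * (a*b+a*c+b*c) - a*b*c| ≤ 10 := (abs_sub _ _).trans (by linarith)
  have t3 : t ^ (3*n) ≤ t ^ (2*n) := pow_le_pow_of_le_one ht ht1 (by omega)
  have t4 : t ^ (4*n) ≤ t ^ (2*n) := pow_le_pow_of_le_one ht ht1 (by omega)
  have m1 := mul_le_mul_of_nonneg_right k1 (pow_nonneg ht (2*n))
  have m2 := mul_le_mul k2 t3 (pow_nonneg ht _) (by norm_num)
  have m3 := mul_le_mul h13 t4 (pow_nonneg ht _) (by norm_num)
  nlinarith [pow_nonneg ht (2*n)]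

/-- asymptotics from a bounded numerator -/
lemma asymp_aux (h : ℕ → ℝ) (s q t A : ℝ) (hs1 : |s| = 1) (hsq : (s * q) * (s / q) = 1) (hq0 : 0 < q)
    (ht : 1 / q ≤ t) (ht0 : 0 < t) (sH : Summable (fun j => |h j| * t ^ j))
    (hA : ∑' j, |h j| * t ^ j ≤ A) (d : ℕ) :
    |∑ j ∈ Finset.range (d + 1), h j * (s * q) ^ (d - j) -
      (∑' j, h j * (s / q) ^ j) * s ^ d * q ^ d| ≤ A * (t⁻¹) ^ d := by
  have habs : ∀ j, ‖h j * (s / q) ^ j‖ ≤ |h j| * t ^ j := by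
    intro j
    rw [Real.norm_eq_abs, abs_mul, abs_pow, abs_div, hs1, abs_of_pos hq0]
    gcongr
  have sm : Summable (fun j => h j * (s / q) ^ j) := Summable.of_norm_bounded sH habs
  rw [← sm.sum_add_tsum_nat_add (d + 1), add_mul, add_mul, Finset.sum_mul, Finset.sum_mul]
  have : ∑ j ∈ Finset.range (d + 1), h j * (s * q) ^ (d - j) =
      ∑ j ∈ Finset.range (d + 1), h j * (s / q) ^ j * s ^ d * q ^ d := by
    refine Finset.sum_congr rfl fun j hj => ?_
    have hj' : j ≤ d := by simpa [Nat.lt_succ_iff] using hj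
    have e : (s * q) ^ d = (s * q) ^ (d - j) * (s * q) ^ j := by
      rw [← pow_add, Nat.sub_add_cancel hj']
    have e2 : (s * q) ^ j * (s / q) ^ j = 1 := by rw [← mul_pow, hsq, one_pow]
    calc h j * (s * q) ^ (d - j) = h j * (s * q) ^ (d - j) * ((s * q) ^ j * (s / q) ^ j) := by
          rw [e2, mul_one]
      _ = h j * (s / q) ^ j * ((s * q) ^ (d - j) * (s * q) ^ j) := by ring
      _ = h j * (s / q) ^ j * (s ^ d * q ^ d) := by rw [← e, mul_pow s q d]
      _ = _ := by ring
  rw [this, sub_add_cancel_left, abs_neg, abs_mul, abs_mul, abs_pow, hs1, one_pow, mul_one,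
    abs_of_pos (pow_pos hq0 d)]
  have st : Summable (fun i => |h (i + (d+1))| * t ^ (i + (d+1))) :=
    (summable_nat_add_iff (f := fun j => |h j| * t ^ j) (d+1)).2 sH
  have sq' : ∀ i, ‖h (i + (d+1)) * (s / q) ^ (i + (d+1))‖ ≤
      (|h (i + (d+1))| * t ^ (i + (d+1))) * ((t * q)⁻¹) ^ d := by
    intro i
    rw [Real.norm_eq_abs, abs_mul, abs_pow, abs_div, hs1, abs_of_pos hq0, mul_assoc]
    refine mul_le_mul_of_nonneg_left ?_ (abs_nonneg _)
    rw [show i + (d+1) = (i + 1) + d by ring, pow_add, pow_add t, mul_assoc, ← mul_pow,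
      show t * (t * q)⁻¹ = 1 / q by field_simp]
    gcongr
  have b1 : |∑' i, h (i + (d+1)) * (s / q) ^ (i + (d+1))| ≤ A * ((t * q)⁻¹) ^ d := by
    have h1 := tsum_of_norm_bounded (st.mul_right (((t * q)⁻¹) ^ d)).hasSum sq'
    rw [Real.norm_eq_abs, tsum_mul_right] at h1
    refine h1.trans ?_
    refine mul_le_mul_of_nonneg_right ?_ (by positivity)
    refine le_trans ?_ hA
    rw [← sH.sum_add_tsum_nat_add (d+1)]
    have : 0 ≤ ∑ i ∈ Finset.range (d+1), |h i| * t ^ i :=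
      Finset.sum_nonneg fun _ _ => by positivity
    linarith
  refine (mul_le_mul_of_nonneg_right b1 (by positivity)).trans (le_of_eq ?_)
  rw [mul_assoc, ← mul_pow]
  congr 2
  field_simp

lemma asymp (F H : PowerSeries ℝ) (s q t A : ℝ) (hs : s = 1 ∨ s = -1) (hq : 1 < q)
    (hF : ∀ d, PowerSeries.coeff d F =
      ∑ j ∈ Finset.range (d + 1), PowerSeries.coeff j H * (s * q) ^ (d - j))
    (ht : 1 / q ≤ t) (hH : Bd H t A) (d : ℕ) :
    |PowerSeries.coeff d F - (∑' j, PowerSeries.coeff j H * (s / q) ^ j) * s ^ d * q ^ d| ≤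
      A * (t⁻¹) ^ d := by
  have hq0 : 0 < q := by linarith
  have ht0 : 0 < t := lt_of_lt_of_le (by positivity) ht
  have hs1 : |s| = 1 := by rcases hs with h | h <;> simp [h]
  have hsq : (s * q) * (s / q) = 1 := by
    rcases hs with h | h <;> rw [h] <;> field_simp
  rw [hF d]
  exact asymp_aux (fun j => PowerSeries.coeff j H) s q t A hs1 hsq hq0 ht ht0 (hH.summable ht0.le)
    (hH.tsum_le ht0.le) d

section polys
variable {Fq : Type} [Field Fq]

/-- monic polynomials coprime to `S` -/
def cop (S : Finset Fq[X]) : Set Fq[X] := {f | f.Monic ∧ ∀ Q ∈ S, ¬ Q ∣ f}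

/-- product of a triple -/
noncomputable def pr (t : Fq[X] × Fq[X] × Fq[X]) : Fq[X] := t.1 * t.2.1 * t.2.2

/-- admissible triples coprime to `S` -/
def tri (S : Finset Fq[X]) : Set (Fq[X] × Fq[X] × Fq[X]) :=
  {t | t.1.Monic ∧ t.2.1.Monic ∧ t.2.2.Monic ∧ Squarefree (pr t) ∧ ∀ Q ∈ S, ¬ Q ∣ pr t}

/-- completely multiplicative on monic polynomials -/
def IsMul (u : Fq[X] → ℝ) : Prop :=
  u 1 = 1 ∧ ∀ f g : Fq[X], f.Monic → g.Monic → u (f * g) = u f * u g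

/-- finite sets of primes -/
def MI (S : Finset Fq[X]) : Prop := ∀ Q ∈ S, Q.Monic ∧ Irreducible Q

lemma dvd_mul_prime {Q R f : Fq[X]} (hQ : Q.Monic) (hQi : Irreducible Q) (hR : R.Monic)
    (hRi : Irreducible R) (hne : R ≠ Q) : R ∣ Q * f ↔ R ∣ f := by
  refine ⟨fun h => ?_, fun h => h.mul_left _⟩
  rcases hRi.prime.dvd_or_dvd h with h | h
  · exact absurd (eq_of_monic_of_associated hR hQ (hRi.associated_of_dvd hQi h)) hne
  · exact h

lemma sqf_mul {Q f : Fq[X]} (hQi : Irreducible Q) :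
    Squarefree (Q * f) ↔ Squarefree f ∧ ¬ Q ∣ f := by
  rw [squarefree_mul_iff, hQi.isRelPrime_iff_not_dvd]
  have := hQi.squarefree
  tauto

lemma finite_monic [Fintype Fq] (n : ℕ) : {f : Fq[X] | f.Monic ∧ f.natDegree = n}.Finite := by
  have e := (monicEquivDegreeLT (R := Fq) n).trans (degreeLTEquiv Fq n).toEquiv
  have : Finite {f : Fq[X] // f.Monic ∧ f.natDegree = n} := Finite.of_equiv _ e.symm
  exact Set.finite_coe_iff.1 this

lemma ncard_monic [Fintype Fq] (n : ℕ) :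
    {f : Fq[X] | f.Monic ∧ f.natDegree = n}.ncard = Fintype.card Fq ^ n := by
  have e := (monicEquivDegreeLT (R := Fq) n).trans (degreeLTEquiv Fq n).toEquiv
  rw [← Nat.card_coe_set_eq]
  have := Nat.card_congr e
  rw [Nat.card_eq_fintype_card (α := Fin n → Fq), Fintype.card_fun, Fintype.card_fin] at this
  exact this

lemma finite_monic_le [Fintype Fq] (n : ℕ) : {f : Fq[X] | f.Monic ∧ f.natDegree ≤ n}.Finite := by
  refine ((Set.finite_Iic n).biUnion (fun i _ => finite_monic (Fq := Fq) i)).subset ?_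
  rintro f ⟨h1, h2⟩
  exact Set.mem_biUnion (x := f.natDegree) h2 ⟨h1, rfl⟩

lemma finite_cop [Fintype Fq] (S : Finset Fq[X]) (n : ℕ) :
    {f | f ∈ cop S ∧ f.natDegree = n}.Finite :=
  (finite_monic n).subset fun _ h => ⟨h.1.1, h.2⟩

lemma natDegree_pr {t : Fq[X] × Fq[X] × Fq[X]} (h1 : t.1.Monic) (h2 : t.2.1.Monic)
    (h3 : t.2.2.Monic) : (pr t).natDegree = t.1.natDegree + t.2.1.natDegree + t.2.2.natDegree := by
  rw [pr, (h1.mul h2).natDegree_mul h3, h1.natDegree_mul h2]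

lemma finite_tri_all [Fintype Fq] (n : ℕ) :
    {t : Fq[X] × Fq[X] × Fq[X] | t.1.Monic ∧ t.2.1.Monic ∧ t.2.2.Monic ∧
      (pr t).natDegree = n}.Finite := by
  have h := finite_monic_le (Fq := Fq) n
  refine (h.prod (h.prod h)).subset ?_
  rintro ⟨f, g, k⟩ ⟨h1, h2, h3, h4⟩
  rw [natDegree_pr h1 h2 h3] at h4
  simp only at h1 h2 h3 h4
  refine ⟨⟨h1, ?_⟩, ⟨h2, ?_⟩, ⟨h3, ?_⟩⟩ <;> simp only <;> omega

lemma finite_tri [Fintype Fq] (S : Finset Fq[X]) (n : ℕ) :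
    {t | t ∈ tri S ∧ (pr t).natDegree = n}.Finite :=
  (finite_tri_all n).subset fun _ h => ⟨h.1.1, h.1.2.1, h.1.2.2.1, h.2⟩

lemma cop_split (S : Finset Fq[X]) (hS : MI S) {Q : Fq[X]} (hQ : Q.Monic) (hQi : Irreducible Q)
    (hQS : Q ∉ S) : cop S = cop (insert Q S) ∪ (fun f => Q * f) '' cop S := by
  have hd : ∀ f, ∀ R ∈ S, (R ∣ Q * f ↔ R ∣ f) := fun f R hR =>
    dvd_mul_prime hQ hQi (hS R hR).1 (hS R hR).2 (fun h => hQS (h ▸ hR))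
  ext f
  constructor
  · rintro ⟨hf, hf2⟩
    by_cases hQf : Q ∣ f
    · right
      obtain ⟨g, rfl⟩ := hQf
      refine ⟨g, ⟨hQ.of_mul_monic_left hf, fun R hR h => hf2 R hR ((hd g R hR).2 h)⟩, rfl⟩
    · left
      refine ⟨hf, fun R hR => ?_⟩
      rcases Finset.mem_insert.1 hR with rfl | h
      · exact hQf
      · exact hf2 R h
  · rintro (⟨hf, hf2⟩ | ⟨g, ⟨hg, hg2⟩, rfl⟩)
    · exact ⟨hf, fun R hR => hf2 R (Finset.mem_insert_of_mem hR)⟩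
    · exact ⟨hQ.mul hg, fun R hR h => hg2 R hR ((hd g R hR).1 h)⟩

lemma gen_cop [Fintype Fq] {u : Fq[X] → ℝ} (hu : IsMul u) (S : Finset Fq[X]) (hS : MI S) :
    gen (cop S) natDegree u = gen (cop ∅) natDegree u *
      ∏ Q ∈ S, (1 - PowerSeries.C (u Q) * PowerSeries.X ^ Q.natDegree) := by
  induction S using Finset.induction_on with
  | empty => simp
  | insert Q S hQS ih =>
    have hS' : MI S := fun R hR => hS R (Finset.mem_insert_of_mem hR)
    obtain ⟨hQ, hQi⟩ := hS Q (Finset.mem_insert_self _ _)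
    have hfin : ∀ n, {f | f ∈ (fun f => Q * f) '' cop S ∧ f.natDegree = n}.Finite := by
      intro n
      refine (finite_monic n).subset ?_
      rintro _ ⟨⟨g, hg, rfl⟩, h⟩
      exact ⟨hQ.mul hg.1, h⟩
    have h1 : gen (cop S) natDegree u = _ :=
      (congrArg (fun A => gen A natDegree u) (cop_split S hS' hQ hQi hQS)).trans
        (gen_union (by
          rw [Set.disjoint_left]
          rintro _ h ⟨g, hg, rfl⟩
          exact h.2 Q (Finset.mem_insert_self _ _) (dvd_mul_right _ _)) (finite_cop _) hfin)
    rw [gen_image (fun f => Q * f) Q.natDegree (u Q)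
      (fun x _ y _ h => mul_left_cancel₀ hQ.ne_zero h)
      (fun x hx => by rw [hQ.natDegree_mul hx.1, add_comm])
      (fun x hx => hu.2 Q x hQ hx.1)] at h1
    rw [Finset.prod_insert hQS]
    have ih' := ih hS'
    linear_combination (1 - PowerSeries.C (u Q) * PowerSeries.X ^ Q.natDegree) * ih' - h1

/-- monic irreducible polynomials of degree at most `N` -/
noncomputable def U [Fintype Fq] (N : ℕ) : Finset Fq[X] :=
  (finite_monic_le (Fq := Fq) N).toFinset.filter Irreducible

lemma mem_U [Fintype Fq] {N : ℕ} {Q : Fq[X]} :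
    Q ∈ U N ↔ (Q.Monic ∧ Q.natDegree ≤ N) ∧ Irreducible Q := by
  simp [U]

lemma MI_U [Fintype Fq] (N : ℕ) : MI (U (Fq := Fq) N) := fun Q hQ =>
  ⟨(mem_U.1 hQ).1.1, (mem_U.1 hQ).2⟩

lemma eq_one_of_cop [Fintype Fq] {N : ℕ} {f : Fq[X]} (hf : f.Monic) (hN : f.natDegree ≤ N)
    (h : ∀ Q ∈ U (Fq := Fq) N, ¬ Q ∣ f) : f = 1 := by
  by_contra hne
  obtain ⟨Q, hQ, hQi, hQf⟩ := exists_monic_irreducible_factor f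
    (fun hu => hne (hf.eq_one_of_isUnit hu))
  exact h Q (mem_U.2 ⟨⟨hQ, (natDegree_le_of_dvd hQf hf.ne_zero).trans hN⟩, hQi⟩) hQf

lemma not_dvd_one_of_MI {S : Finset Fq[X]} (hS : MI S) : ∀ Q ∈ S, ¬ Q ∣ 1 := fun Q hQ h =>
  (hS Q hQ).2.not_isUnit (isUnit_of_dvd_one h)

lemma gen_cop_U [Fintype Fq] {u : Fq[X] → ℝ} (hu : IsMul u) (N : ℕ) :
    PowerSeries.X ^ (N + 1) ∣ gen (cop (U N)) natDegree u - 1 := by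
  rw [PowerSeries.X_pow_dvd_iff]
  intro m hm
  rw [map_sub, PowerSeries.coeff_one, gen, PowerSeries.coeff_mk]
  have key : {f | f ∈ cop (U (Fq := Fq) N) ∧ f.natDegree = m} = if m = 0 then {1} else ∅ := by
    ext f
    split_ifs with h
    · subst h
      simp only [Set.mem_ofPred_eq, Set.mem_singleton_iff]
      constructor
      · rintro ⟨⟨h1, _⟩, h2⟩
        exact eq_one_of_monic_natDegree_zero h1 h2
      · rintro rfl
        exact ⟨⟨monic_one, not_dvd_one_of_MI (MI_U N)⟩, natDegree_one⟩
    · simp only [Set.mem_ofPred_eq, Set.mem_empty_iff_false, iff_false]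
      rintro ⟨⟨h1, h3⟩, h2⟩
      have := eq_one_of_cop h1 (by omega) h3
      subst this
      simp at h2; omega
  rw [key]
  split_ifs with h
  · simp [hu.1]
  · simp

/-- triple weight -/
noncomputable def tw (u v z : Fq[X] → ℝ) (t : Fq[X] × Fq[X] × Fq[X]) : ℝ :=
  u t.1 * v t.2.1 * z t.2.2

lemma gen_tri_U [Fintype Fq] {u v z : Fq[X] → ℝ} (hu : IsMul u) (hv : IsMul v) (hz : IsMul z)
    (N : ℕ) : PowerSeries.X ^ (N + 1) ∣
      gen (tri (U N)) (fun t => (pr t).natDegree) (tw u v z) - 1 := by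
  rw [PowerSeries.X_pow_dvd_iff]
  intro m hm
  rw [map_sub, PowerSeries.coeff_one, gen, PowerSeries.coeff_mk]
  have key : {t | t ∈ tri (U (Fq := Fq) N) ∧ (pr t).natDegree = m} =
      if m = 0 then {(1, 1, 1)} else ∅ := by
    ext t
    split_ifs with h
    · subst h
      simp only [Set.mem_ofPred_eq, Set.mem_singleton_iff]
      constructor
      · rintro ⟨⟨h1, h2, h3, _⟩, h⟩
        rw [natDegree_pr h1 h2 h3] at h
        obtain ⟨f, g, k⟩ := t
        simp only at h1 h2 h3 h
        rw [eq_one_of_monic_natDegree_zero h1 (by omega),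
          eq_one_of_monic_natDegree_zero h2 (by omega),
          eq_one_of_monic_natDegree_zero h3 (by omega)]
      · rintro rfl
        refine ⟨⟨monic_one, monic_one, monic_one, ?_, ?_⟩, ?_⟩ <;> simp only [pr, mul_one]
        · exact squarefree_one
        · exact not_dvd_one_of_MI (MI_U N)
        · exact natDegree_one
    · simp only [Set.mem_ofPred_eq, Set.mem_empty_iff_false, iff_false]
      rintro ⟨⟨h1, h2, h3, _, h4⟩, h5⟩
      have := eq_one_of_cop ((h1.mul h2).mul h3) (by change (pr t).natDegree ≤ N; omega) h4
      rw [pr, this] at h5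
      simp at h5; omega
  rw [key]
  split_ifs with h
  · simp [tw, hu.1, hv.1, hz.1]
  · simp

lemma tri_split (S : Finset Fq[X]) (hS : MI S) {Q : Fq[X]} (hQ : Q.Monic) (hQi : Irreducible Q)
    (hQS : Q ∉ S) : tri S = ((tri (insert Q S) ∪ (fun t => (Q * t.1, t.2)) '' tri (insert Q S)) ∪
      (fun t => (t.1, Q * t.2.1, t.2.2)) '' tri (insert Q S)) ∪
      (fun t => (t.1, t.2.1, Q * t.2.2)) '' tri (insert Q S) := by
  have hd : ∀ f, ∀ R ∈ S, (R ∣ Q * f ↔ R ∣ f) := fun f R hR =>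
    dvd_mul_prime hQ hQi (hS R hR).1 (hS R hR).2 (fun h => hQS (h ▸ hR))
  have key : ∀ f : Fq[X], (Squarefree (Q * f) ∧ ∀ R ∈ S, ¬ R ∣ Q * f) ↔
      (Squarefree f ∧ ∀ R ∈ insert Q S, ¬ R ∣ f) := by
    intro f
    rw [sqf_mul hQi, Finset.forall_mem_insert, and_assoc]
    refine and_congr_right fun _ => and_congr_right fun _ => ?_
    exact forall₂_congr fun R hR => not_congr (hd f R hR)
  ext ⟨f, g, k⟩
  have e1 : ∀ x : Fq[X], Q * x * g * k = Q * (x * g * k) := fun x => by ring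
  have e2 : ∀ x : Fq[X], f * (Q * x) * k = Q * (f * x * k) := fun x => by ring
  have e3 : ∀ x : Fq[X], f * g * (Q * x) = Q * (f * g * x) := fun x => by ring
  constructor
  · rintro ⟨h1, h2, h3, h4⟩
    simp only [pr] at h1 h2 h3 h4
    by_cases hQf : Q ∣ f * g * k
    · rcases hQi.prime.dvd_or_dvd hQf with h | ⟨x, rfl⟩
      · rcases hQi.prime.dvd_or_dvd h with ⟨x, rfl⟩ | ⟨x, rfl⟩
        · left; left; right
          rw [e1, key] at h4
          exact ⟨(x, g, k), ⟨hQ.of_mul_monic_left h1, h2, h3, h4⟩, rfl⟩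
        · left; right
          rw [e2, key] at h4
          exact ⟨(f, x, k), ⟨h1, hQ.of_mul_monic_left h2, h3, h4⟩, rfl⟩
      · right
        rw [e3, key] at h4
        exact ⟨(f, g, x), ⟨h1, h2, hQ.of_mul_monic_left h3, h4⟩, rfl⟩
    · left; left; left
      refine ⟨h1, h2, h3, h4.1, ?_⟩
      rw [Finset.forall_mem_insert]
      exact ⟨hQf, h4.2⟩
  · rintro (((⟨h1, h2, h3, h4, h5⟩ | ⟨⟨x, y, w⟩, ⟨h1, h2, h3, h4⟩, h⟩) |
      ⟨⟨x, y, w⟩, ⟨h1, h2, h3, h4⟩, h⟩) | ⟨⟨x, y, w⟩, ⟨h1, h2, h3, h4⟩, h⟩)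
    · exact ⟨h1, h2, h3, h4, fun R hR => h5 R (Finset.mem_insert_of_mem hR)⟩
    all_goals
      simp only [Prod.mk.injEq] at h
      obtain ⟨rfl, rfl, rfl⟩ := h
      simp only [pr] at h1 h2 h3 h4
      rw [← key] at h4
    · refine ⟨hQ.mul h1, h2, h3, ?_⟩
      simp only [pr]; rwa [e1]
    · refine ⟨h1, hQ.mul h2, h3, ?_⟩
      simp only [pr]; rwa [e2]
    · refine ⟨h1, h2, hQ.mul h3, ?_⟩
      simp only [pr]; rwa [e3]

lemma gen_tri_step [Fintype Fq] {u v z : Fq[X] → ℝ} (hu : IsMul u) (hv : IsMul v) (hz : IsMul z)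
    (S : Finset Fq[X]) (hS : MI S) {Q : Fq[X]} (hQ : Q.Monic) (hQi : Irreducible Q)
    (hQS : Q ∉ S) : gen (tri S) (fun t => (pr t).natDegree) (tw u v z) =
      gen (tri (insert Q S)) (fun t => (pr t).natDegree) (tw u v z) *
      (1 + PowerSeries.C (u Q + v Q + z Q) * PowerSeries.X ^ Q.natDegree) := by
  have hsp := tri_split S hS hQ hQi hQS
  have hfS := finite_tri S
  have hsub : ∀ B : Set (Fq[X] × Fq[X] × Fq[X]), B ⊆ tri S → ∀ n,
      {t | t ∈ B ∧ (pr t).natDegree = n}.Finite := fun B hB n =>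
    (hfS n).subset fun t ht => ⟨hB ht.1, ht.2⟩
  set T := tri (insert Q S) with hT
  set A1 := (fun t : Fq[X] × Fq[X] × Fq[X] => (Q * t.1, t.2)) '' T with hA1
  set A2 := (fun t : Fq[X] × Fq[X] × Fq[X] => (t.1, Q * t.2.1, t.2.2)) '' T with hA2
  set A3 := (fun t : Fq[X] × Fq[X] × Fq[X] => (t.1, t.2.1, Q * t.2.2)) '' T with hA3
  have q0 : ∀ t ∈ T, ¬ Q ∣ t.1 ∧ ¬ Q ∣ t.2.1 ∧ ¬ Q ∣ t.2.2 := by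
    intro t ht
    have := ht.2.2.2.2 Q (Finset.mem_insert_self _ _)
    refine ⟨fun h => this ?_, fun h => this ?_, fun h => this ?_⟩
    · exact (h.mul_right _).mul_right _
    · exact (h.mul_left _).mul_right _
    · exact h.mul_left _
  have d1 : Disjoint T A1 := by
    rw [Set.disjoint_left]
    rintro _ h ⟨t, ht, rfl⟩
    exact (q0 _ h).1 (dvd_mul_right _ _)
  have d2 : Disjoint (T ∪ A1) A2 := by
    rw [Set.disjoint_left]
    rintro _ h ⟨t, ht, rfl⟩
    rcases h with h | ⟨s, hs, h⟩
    · exact (q0 _ h).2.1 (dvd_mul_right _ _)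
    · simp only [Prod.ext_iff] at h
      exact (q0 _ hs).2.1 (h.2.1 ▸ dvd_mul_right _ _)
  have d3 : Disjoint (T ∪ A1 ∪ A2) A3 := by
    rw [Set.disjoint_left]
    rintro _ h ⟨t, ht, rfl⟩
    rcases h with (h | ⟨s, hs, h⟩) | ⟨s, hs, h⟩
    · exact (q0 _ h).2.2 (dvd_mul_right _ _)
    · simp only [Prod.ext_iff] at h
      exact (q0 _ hs).2.2 (h.2.2 ▸ dvd_mul_right _ _)
    · simp only [Prod.ext_iff] at h
      exact (q0 _ hs).2.2 (h.2.2 ▸ dvd_mul_right _ _)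
  have n0 : ∀ t ∈ T, t.1.Monic ∧ t.2.1.Monic ∧ t.2.2.Monic := fun t ht =>
    ⟨ht.1, ht.2.1, ht.2.2.1⟩
  have g1 : gen A1 (fun t => (pr t).natDegree) (tw u v z) = _ :=
    gen_image (A := T) (dg := fun t => (pr t).natDegree) (w := tw u v z)
      (fun t : Fq[X] × Fq[X] × Fq[X] => (Q * t.1, t.2)) Q.natDegree (u Q)
      (fun x _ y _ h => by
        simp only [Prod.ext_iff] at h
        exact Prod.ext (mul_left_cancel₀ hQ.ne_zero h.1) (Prod.ext h.2.1 h.2.2))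
      (fun t ht => by
        obtain ⟨h1, h2, h3⟩ := n0 t ht
        have h := natDegree_pr (t := (Q * t.1, t.2)) (hQ.mul h1) h2 h3
        simp only [hQ.natDegree_mul h1] at h
        rw [natDegree_pr h1 h2 h3]
        omega)
      (fun t ht => by
        obtain ⟨h1, h2, h3⟩ := n0 t ht
        simp only [tw]
        rw [hu.2 _ _ hQ h1]; ring)
  have g2 : gen A2 (fun t => (pr t).natDegree) (tw u v z) = _ :=
    gen_image (A := T) (dg := fun t => (pr t).natDegree) (w := tw u v z)
      (fun t : Fq[X] × Fq[X] × Fq[X] => (t.1, Q * t.2.1, t.2.2)) Q.natDegree (v Q)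
      (fun x _ y _ h => by
        simp only [Prod.ext_iff] at h
        exact Prod.ext h.1 (Prod.ext (mul_left_cancel₀ hQ.ne_zero h.2.1) h.2.2))
      (fun t ht => by
        obtain ⟨h1, h2, h3⟩ := n0 t ht
        have h := natDegree_pr (t := (t.1, Q * t.2.1, t.2.2)) h1 (hQ.mul h2) h3
        simp only [hQ.natDegree_mul h2] at h
        rw [natDegree_pr h1 h2 h3]
        omega)
      (fun t ht => by
        obtain ⟨h1, h2, h3⟩ := n0 t ht
        simp only [tw]
        rw [hv.2 _ _ hQ h2]; ring)
  have g3 : gen A3 (fun t => (pr t).natDegree) (tw u v z) = _ :=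
    gen_image (A := T) (dg := fun t => (pr t).natDegree) (w := tw u v z)
      (fun t : Fq[X] × Fq[X] × Fq[X] => (t.1, t.2.1, Q * t.2.2)) Q.natDegree (z Q)
      (fun x _ y _ h => by
        simp only [Prod.ext_iff] at h
        exact Prod.ext h.1 (Prod.ext h.2.1 (mul_left_cancel₀ hQ.ne_zero h.2.2)))
      (fun t ht => by
        obtain ⟨h1, h2, h3⟩ := n0 t ht
        have h := natDegree_pr (t := (t.1, t.2.1, Q * t.2.2)) h1 h2 (hQ.mul h3)
        simp only [hQ.natDegree_mul h3] at h
        rw [natDegree_pr h1 h2 h3]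
        omega)
      (fun t ht => by
        obtain ⟨h1, h2, h3⟩ := n0 t ht
        simp only [tw]
        rw [hz.2 _ _ hQ h3]; ring)
  have s3 : A3 ⊆ tri S := by rw [hsp]; exact Set.subset_union_right
  have s012 : T ∪ A1 ∪ A2 ⊆ tri S := by rw [hsp]; exact Set.subset_union_left
  have s2 : A2 ⊆ tri S := Set.subset_union_right.trans s012
  have s01 : T ∪ A1 ⊆ tri S := Set.subset_union_left.trans s012
  have s1 : A1 ⊆ tri S := Set.subset_union_right.trans s01
  have s0 : T ⊆ tri S := Set.subset_union_left.trans s01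
  have e := congrArg (fun A => gen A (fun t => (pr t).natDegree) (tw u v z)) hsp
  rw [gen_union d3 (hsub _ s012) (hsub _ s3), gen_union d2 (hsub _ s01) (hsub _ s2),
    gen_union d1 (hsub _ s0) (hsub _ s1), g1, g2, g3] at e
  rw [e, map_add, map_add]
  ring

lemma gen_tri [Fintype Fq] {u v z : Fq[X] → ℝ} (hu : IsMul u) (hv : IsMul v) (hz : IsMul z)
    (S : Finset Fq[X]) (hS : MI S) : gen (tri ∅) (fun t => (pr t).natDegree) (tw u v z) =
      gen (tri S) (fun t => (pr t).natDegree) (tw u v z) *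
      ∏ Q ∈ S, (1 + PowerSeries.C (u Q + v Q + z Q) * PowerSeries.X ^ Q.natDegree) := by
  induction S using Finset.induction_on with
  | empty => simp
  | insert Q S hQS ih =>
    have hS' : MI S := fun R hR => hS R (Finset.mem_insert_of_mem hR)
    obtain ⟨hQ, hQi⟩ := hS Q (Finset.mem_insert_self _ _)
    rw [ih hS', gen_tri_step hu hv hz S hS' hQ hQi hQS, Finset.prod_insert hQS]
    ring

lemma dvd_sub_one_mul {D x y : PowerSeries ℝ} (hx : D ∣ x - 1) (hy : D ∣ y - 1) :
    D ∣ x * y - 1 := by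
  have : x * y - 1 = (x - 1) * y + (y - 1) := by ring
  rw [this]
  exact dvd_add (hx.mul_right _) hy

lemma coeff_G [Fintype Fq] {u v z : Fq[X] → ℝ} (hu : IsMul u) (hv : IsMul v) (hz : IsMul z)
    (G : PowerSeries ℝ)
    (hG : gen (tri ∅) (fun t => (pr t).natDegree) (tw u v z) = G * (gen (cop ∅) natDegree u *
      gen (cop ∅) natDegree v * gen (cop ∅) natDegree z))
    (hne : gen (cop ∅) natDegree u * gen (cop ∅) natDegree v * gen (cop ∅) natDegree z ≠ 0)
    (N i : ℕ) (hi : i < N + 1) : PowerSeries.coeff i G =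
      PowerSeries.coeff i (∏ Q ∈ U (Fq := Fq) N, loc (u Q) (v Q) (z Q) Q.natDegree) := by
  have hS := MI_U (Fq := Fq) N
  have d1 := gen_cop_U hu N
  have d2 := gen_cop_U hv N
  have d3 := gen_cop_U hz N
  have d4 := gen_tri_U hu hv hz N
  have eF := gen_tri hu hv hz _ hS
  have e : G * (gen (cop (U N)) natDegree u * gen (cop (U N)) natDegree v *
      gen (cop (U N)) natDegree z) = gen (tri (U N)) (fun t => (pr t).natDegree) (tw u v z) *
      ∏ Q ∈ U (Fq := Fq) N, loc (u Q) (v Q) (z Q) Q.natDegree := by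
    apply mul_right_cancel₀ hne
    simp only [loc, Finset.prod_mul_distrib]
    rw [gen_cop hu _ hS, gen_cop hv _ hS, gen_cop hz _ hS]
    rw [hG] at eF
    generalize (∏ Q ∈ U (Fq := Fq) N, (1 - PowerSeries.C (u Q) * PowerSeries.X ^ Q.natDegree)) = x1 at *
    generalize (∏ Q ∈ U (Fq := Fq) N, (1 - PowerSeries.C (v Q) * PowerSeries.X ^ Q.natDegree)) = x2 at *
    generalize (∏ Q ∈ U (Fq := Fq) N, (1 - PowerSeries.C (z Q) * PowerSeries.X ^ Q.natDegree)) = x3 at *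
    linear_combination (gen (cop ∅) natDegree u * gen (cop ∅) natDegree v *
      gen (cop ∅) natDegree z * x1 * x2 * x3) * eF
  have d5 := dvd_sub_one_mul (dvd_sub_one_mul d1 d2) d3
  generalize (gen (cop (U N)) natDegree u * gen (cop (U N)) natDegree v *
      gen (cop (U N)) natDegree z) = x at *
  generalize gen (tri (U N)) (fun t => (pr t).natDegree) (tw u v z) = y at *
  generalize (∏ Q ∈ U (Fq := Fq) N, loc (u Q) (v Q) (z Q) Q.natDegree) = p at *
  have : G - p = (y - 1) * p - G * (x - 1) := by linear_combination e
  have d6 : PowerSeries.X ^ (N + 1) ∣ G - p := by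
    rw [this]
    exact dvd_sub (d4.mul_right _) (d5.mul_left _)
  have := (PowerSeries.X_pow_dvd_iff.1 d6) i hi
  rwa [map_sub, sub_eq_zero] at this

end polys

section chi
variable {Fq : Type} [Field Fq] [Fintype Fq]

lemma adj_finite {P : Fq[X]} (hP : P.Monic) : Finite (AdjoinRoot P) := by
  have : Module.Finite Fq (AdjoinRoot P) := hP.finite_adjoinRoot
  exact Module.finite_of_finite Fq

lemma chiP_eq {P : Fq[X]} [Fact (Irreducible P)] [Fintype (AdjoinRoot P)] (F : Fq[X]) :
    chiP P F = quadraticChar (AdjoinRoot P) (AdjoinRoot.mk P F) := by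
  rw [chiP, quadraticChar_apply, quadraticCharFun]
  have h1 : P ∣ F ↔ AdjoinRoot.mk P F = 0 := AdjoinRoot.mk_eq_zero.symm
  have h2 : (∃ G, P ∣ (F - G ^ 2)) ↔ IsSquare (AdjoinRoot.mk P F) := by
    constructor
    · rintro ⟨G, hG⟩
      refine ⟨AdjoinRoot.mk P G, ?_⟩
      rw [← AdjoinRoot.mk_eq_zero, map_sub, sub_eq_zero, map_pow] at hG
      rw [hG, sq]
    · rintro ⟨x, hx⟩
      obtain ⟨G, rfl⟩ := AdjoinRoot.mk_surjective x
      refine ⟨G, ?_⟩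
      rw [← AdjoinRoot.mk_eq_zero, map_sub, sub_eq_zero, map_pow, hx, sq]
  simp only [h1, h2]

lemma chiP_mul {P : Fq[X]} (hP : P.Monic) (hPi : Irreducible P) (F G : Fq[X]) :
    chiP P (F * G) = chiP P F * chiP P G := by
  haveI : Fact (Irreducible P) := ⟨hPi⟩
  haveI := adj_finite hP
  haveI := Fintype.ofFinite (AdjoinRoot P)
  rw [chiP_eq, chiP_eq, chiP_eq, map_mul, map_mul]

lemma chiP_one {P : Fq[X]} (hPi : Irreducible P) : chiP P 1 = 1 := by
  rw [chiP, if_neg (fun h => hPi.not_isUnit (isUnit_of_dvd_one h)), if_pos ⟨1, by simp⟩]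

lemma chiP_abs (P F : Fq[X]) : |(chiP P F : ℝ)| ≤ 1 := by
  rw [chiP]; split_ifs <;> simp

lemma chiP_sum {P : Fq[X]} (hP : P.Monic) (hPi : Irreducible P) (hodd : Odd (Fintype.card Fq))
    (n : ℕ) (hn : P.natDegree ≤ n) :
    ∑ f ∈ (finite_monic (Fq := Fq) n).toFinset, chiP P f = 0 := by
  haveI : Fact (Irreducible P) := ⟨hPi⟩
  haveI := adj_finite hP
  haveI := Fintype.ofFinite (AdjoinRoot P)
  have hchar : ringChar (AdjoinRoot P) ≠ 2 := by
    rw [← Algebra.ringChar_eq Fq (AdjoinRoot P)]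
    intro h
    rw [FiniteField.even_card_iff_char_two] at h
    rw [Nat.odd_iff] at hodd
    omega
  have hz := quadraticChar_sum_zero hchar
  set M := (finite_monic (Fq := Fq) n).toFinset with hM
  have hmem : ∀ f, f ∈ M ↔ f.Monic ∧ f.natDegree = n := fun f => by simp [hM]
  have tr : ∀ x : AdjoinRoot P, ∑ f ∈ M, chiP P f =
      ∑ f ∈ M, quadraticChar (AdjoinRoot P) (AdjoinRoot.mk P f + x) := by
    intro x
    obtain ⟨g, rfl⟩ := AdjoinRoot.mk_surjective x
    have hr : (g %ₘ P).degree < P.degree := degree_modByMonic_lt g hP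
    have hrn : ∀ f ∈ M, (g %ₘ P).degree < f.degree := by
      intro f hf
      obtain ⟨h1, h2⟩ := (hmem f).1 hf
      refine hr.trans_le ?_
      rw [degree_eq_natDegree hP.ne_zero, degree_eq_natDegree h1.ne_zero, h2]
      exact_mod_cast hn
    have hmk : AdjoinRoot.mk P (g %ₘ P) = AdjoinRoot.mk P g := by
      rw [AdjoinRoot.mk_eq_mk, modByMonic_eq_sub_mul_div g P]
      simp
    symm
    refine Finset.sum_nbij' (fun f => f + g %ₘ P) (fun f => f - g %ₘ P) ?_ ?_ ?_ ?_ ?_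
    · intro f hf
      obtain ⟨h1, h2⟩ := (hmem f).1 hf
      rw [hmem]
      exact ⟨h1.add_of_left (hrn f hf), (natDegree_add_eq_left_of_degree_lt (hrn f hf)).trans h2⟩
    · intro f hf
      obtain ⟨h1, h2⟩ := (hmem f).1 hf
      rw [hmem]
      exact ⟨h1.sub_of_left (hrn f hf), (natDegree_eq_of_degree_eq (degree_sub_eq_left_of_degree_lt (hrn f hf))).trans h2⟩
    · intro f _; simp
    · intro f _; simp
    · intro f _
      rw [chiP_eq, map_add (AdjoinRoot.mk P), hmk]
  have hsum : (Fintype.card (AdjoinRoot P) : ℤ) * ∑ f ∈ M, chiP P f = 0 := by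
    calc _ = ∑ x : AdjoinRoot P, ∑ f ∈ M, chiP P f := by simp
      _ = ∑ x : AdjoinRoot P, ∑ f ∈ M, quadraticChar (AdjoinRoot P) (AdjoinRoot.mk P f + x) :=
        Finset.sum_congr rfl fun x _ => tr x
      _ = ∑ f ∈ M, ∑ x : AdjoinRoot P, quadraticChar (AdjoinRoot P) (AdjoinRoot.mk P f + x) :=
        Finset.sum_comm
      _ = ∑ f ∈ M, 0 := by
        refine Finset.sum_congr rfl fun f _ => ?_
        rw [← hz]
        exact Fintype.sum_equiv (Equiv.addLeft (AdjoinRoot.mk P f)) _ _ (fun x => rfl)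
      _ = 0 := by simp
  rcases mul_eq_zero.1 hsum with h | h
  · exact absurd h (by exact_mod_cast Fintype.card_ne_zero)
  · exact h

/-- twisted character -/
noncomputable def uu (P : Fq[X]) (a : ℝ) (f : Fq[X]) : ℝ := (chiP P f : ℝ) * a ^ f.natDegree

lemma isMul_uu {P : Fq[X]} (hP : P.Monic) (hPi : Irreducible P) (a : ℝ) : IsMul (uu P a) := by
  constructor
  · simp [uu, chiP_one hPi]
  · intro f g hf hg
    simp only [uu]
    rw [chiP_mul hP hPi, hf.natDegree_mul hg, pow_add]
    push_cast; ring

lemma isMul_pow (a : ℝ) : IsMul (fun f : Fq[X] => a ^ f.natDegree) := by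
  constructor
  · simp
  · intro f g hf hg
    simp only
    rw [hf.natDegree_mul hg, pow_add]

lemma coeff_gen_cop (w : Fq[X] → ℝ) (n : ℕ) : PowerSeries.coeff n (gen (cop ∅) natDegree w) =
    ∑ f ∈ (finite_monic (Fq := Fq) n).toFinset, w f := by
  rw [gen, PowerSeries.coeff_mk, ← finsum_mem_eq_finite_toFinset_sum]
  refine finsum_mem_congr ?_ (fun _ _ => rfl)
  ext f
  simp [cop]

lemma mem_fm {n : ℕ} {f : Fq[X]} :
    f ∈ (finite_monic (Fq := Fq) n).toFinset ↔ f.Monic ∧ f.natDegree = n := by simp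

lemma card_fm (n : ℕ) : (finite_monic (Fq := Fq) n).toFinset.card = Fintype.card Fq ^ n := by
  rw [← Set.ncard_eq_toFinset_card _ (finite_monic n), ncard_monic]

lemma coeff_L {P : Fq[X]} (hP : P.Monic) (hPi : Irreducible P) (hodd : Odd (Fintype.card Fq))
    (a : ℝ) (n : ℕ) (hn : P.natDegree ≤ n) :
    PowerSeries.coeff n (gen (cop ∅) natDegree (uu P a)) = 0 := by
  rw [coeff_gen_cop]
  have : ∀ f ∈ (finite_monic (Fq := Fq) n).toFinset, uu P a f = (chiP P f : ℝ) * a ^ n := by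
    intro f hf
    rw [uu, (mem_fm.1 hf).2]
  rw [Finset.sum_congr rfl this, ← Finset.sum_mul]
  have h := chiP_sum hP hPi hodd n hn
  have h2 : ∑ f ∈ (finite_monic (Fq := Fq) n).toFinset, (chiP P f : ℝ) = 0 := by exact_mod_cast h
  rw [h2, zero_mul]

lemma coeff_Z (a : ℝ) (n : ℕ) :
    PowerSeries.coeff n (gen (cop ∅) natDegree (fun f : Fq[X] => a ^ f.natDegree)) =
      (a * Fintype.card Fq) ^ n := by
  rw [coeff_gen_cop]
  have : ∀ f ∈ (finite_monic (Fq := Fq) n).toFinset, a ^ f.natDegree = a ^ n := by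
    intro f hf
    rw [(mem_fm.1 hf).2]
  rw [Finset.sum_congr rfl this, Finset.sum_const, card_fm, mul_pow]
  simp [mul_comm]

lemma const_gen {u : Fq[X] → ℝ} (hu : IsMul u) :
    PowerSeries.constantCoeff (gen (cop ∅) natDegree u) = 1 := by
  rw [← PowerSeries.coeff_zero_eq_constantCoeff_apply, coeff_gen_cop]
  have : (finite_monic (Fq := Fq) 0).toFinset = {1} := by
    ext f
    rw [mem_fm, Finset.mem_singleton]
    constructor
    · rintro ⟨h1, h2⟩
      exact eq_one_of_monic_natDegree_zero h1 h2
    · rintro rfl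
      exact ⟨monic_one, natDegree_one⟩
  rw [this, Finset.sum_singleton, hu.1]

lemma sum_U_le (N : ℕ) {t : ℝ} (ht : 0 ≤ t) (hlt : (Fintype.card Fq : ℝ) * t ^ 2 < 1) :
    ∑ Q ∈ U (Fq := Fq) N, t ^ (2 * Q.natDegree) ≤ (1 - (Fintype.card Fq : ℝ) * t ^ 2)⁻¹ := by
  have hm : ∀ Q ∈ U (Fq := Fq) N, Q.natDegree ∈ Finset.range (N + 1) := fun Q hQ => by
    have := (mem_U.1 hQ).1.2
    simp only [Finset.mem_range]; omega
  rw [← Finset.sum_fiberwise_of_maps_to hm]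
  calc _ ≤ ∑ n ∈ Finset.range (N + 1), ((Fintype.card Fq : ℝ) * t ^ 2) ^ n := by
        refine Finset.sum_le_sum fun n _ => ?_
        have : ∀ Q ∈ (U (Fq := Fq) N).filter (fun Q => Q.natDegree = n),
            t ^ (2 * Q.natDegree) = t ^ (2 * n) := fun Q hQ => by
          rw [(Finset.mem_filter.1 hQ).2]
        rw [Finset.sum_congr rfl this, Finset.sum_const, nsmul_eq_mul, mul_pow, ← pow_mul]
        refine mul_le_mul_of_nonneg_right ?_ (by positivity)
        rw [← Nat.cast_pow, ← card_fm]
        refine Nat.cast_le.2 (Finset.card_le_card ?_)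
        intro Q hQ
        rw [Finset.mem_filter, mem_U] at hQ
        exact mem_fm.2 ⟨hQ.1.1.1, hQ.2⟩
    _ ≤ ∑' n, ((Fintype.card Fq : ℝ) * t ^ 2) ^ n :=
        (summable_geometric_of_lt_one (by positivity) hlt).sum_le_tsum _ (fun _ _ => by positivity)
    _ = _ := tsum_geometric_of_lt_one (by positivity) hlt

lemma core {P : Fq[X]} (hP : P.Monic) (hPi : Irreducible P) (hodd : Odd (Fintype.card Fq))
    (a b : ℝ) (ha : a = 1 ∨ a = -1) (hb : b = 1 ∨ b = -1) :
    ∃ c : ℝ, ∀ ε : ℝ, 0 < ε → ∃ K : ℝ, ∀ d : ℕ,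
      |PowerSeries.coeff d (gen (tri ∅) (fun t => (pr t).natDegree)
        (tw (uu P a) (uu P b) (fun f => (a * b) ^ f.natDegree))) -
          c * (a * b) ^ d * (Fintype.card Fq : ℝ) ^ d| ≤
        K * (Fintype.card Fq : ℝ) ^ ((1 / 2 + ε) * (d : ℝ)) := by
  have hs : a * b = 1 ∨ a * b = -1 := by
    rcases ha with rfl | rfl <;> rcases hb with rfl | rfl <;> norm_num
  have abs_pm : ∀ x : ℝ, (x = 1 ∨ x = -1) → |x| = 1 := by
    rintro x (rfl | rfl) <;> simp
  have hq1 : (1 : ℝ) < Fintype.card Fq := by exact_mod_cast Fintype.one_lt_card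
  have hua := isMul_uu hP hPi a
  have hub := isMul_uu hP hPi b
  have huz := isMul_pow (Fq := Fq) (a * b)
  have hcoef := coeff_Z (Fq := Fq) (a * b)
  have hLa := coeff_L hP hPi hodd a
  have hLb := coeff_L hP hPi hodd b
  have kG := coeff_G hua hub huz
  have ca := const_gen hua
  have cb := const_gen hub
  have cz := const_gen huz
  have bl : ∀ (Q : Fq[X]) (t : ℝ), 0 ≤ t → t ≤ 1 →
      Bd (loc (uu P a Q) (uu P b Q) ((a * b) ^ Q.natDegree) Q.natDegree) t
        (1 + 30 * t ^ (2 * Q.natDegree)) := by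
    intro Q t ht ht1
    refine Bd.loc _ ?_ ?_ ?_ ht ht1
    · rw [uu, abs_mul, abs_pow, abs_pm a ha, one_pow, mul_one]; exact chiP_abs _ _
    · rw [uu, abs_mul, abs_pow, abs_pm b hb, one_pow, mul_one]; exact chiP_abs _ _
    · rw [abs_pow, abs_pm _ hs, one_pow]
  generalize gen (tri ∅) (fun t => (pr t).natDegree)
        (tw (uu P a) (uu P b) (fun f => (a * b) ^ f.natDegree)) = F at *
  generalize gen (cop ∅) natDegree (uu P a) = La at *
  generalize gen (cop ∅) natDegree (uu P b) = Lb at *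
  generalize gen (cop ∅) natDegree (fun f : Fq[X] => (a * b) ^ f.natDegree) = Z at *
  set q : ℝ := (Fintype.card Fq : ℝ) with hq
  have hc : PowerSeries.constantCoeff (La * Lb * Z) = 1 := by
    rw [map_mul, map_mul, ca, cb, cz]; norm_num
  have hne : La * Lb * Z ≠ 0 := by
    intro h
    rw [h] at hc
    simp at hc
  set G := F * (La * Lb * Z)⁻¹ with hGdef
  have hFG : F = G * (La * Lb * Z) := by
    rw [hGdef, mul_assoc, mul_comm (La * Lb * Z)⁻¹, PowerSeries.mul_inv_cancel _ (by rw [hc]; norm_num),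
      mul_one]
  have kG' := kG G hFG hne
  set H := G * La * Lb with hH
  have hFH : F = H * Z := by rw [hFG, hH]; ring
  have hF : ∀ d, PowerSeries.coeff d F =
      ∑ j ∈ Finset.range (d + 1), PowerSeries.coeff j H * (a * b * q) ^ (d - j) := by
    intro d
    rw [hFH, PowerSeries.coeff_mul, Finset.Nat.sum_antidiagonal_eq_sum_range_succ_mk]
    exact Finset.sum_congr rfl fun j _ => by rw [hcoef]
  refine ⟨∑' j, PowerSeries.coeff j H * (a * b / q) ^ j, ?_⟩
  intro ε' hε'
  set ε := min ε' (1 / 2) with hε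
  have hε0 : 0 < ε := lt_min hε' (by norm_num)
  have hε1 : ε ≤ 1 / 2 := min_le_right _ _
  have hε2 : ε ≤ ε' := min_le_left _ _
  have hq0 : 0 < q := by linarith
  set t : ℝ := q ^ (-(1 / 2 + ε)) with ht
  have ht0 : 0 < t := Real.rpow_pos_of_pos hq0 _
  have ht1 : t ≤ 1 := Real.rpow_le_one_of_one_le_of_nonpos hq1.le (by linarith)
  have htq : 1 / q ≤ t := by
    rw [one_div, ← Real.rpow_neg_one]
    exact Real.rpow_le_rpow_of_exponent_le hq1.le (by linarith)
  have hlt : q * t ^ 2 < 1 := by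
    have : q * t ^ 2 = q ^ (-(2 * ε)) := by
      rw [ht, ← Real.rpow_natCast, ← Real.rpow_mul hq0.le]
      nth_rewrite 1 [← Real.rpow_one q]
      rw [← Real.rpow_add hq0]
      congr 1
      push_cast; ring
    rw [this]
    exact Real.rpow_lt_one_of_one_lt_of_neg hq1 (by linarith)
  have bG : Bd G t (Real.exp (30 * (1 - q * t ^ 2)⁻¹)) := by
    intro N
    have h1 : ∑ i ∈ Finset.range N, |PowerSeries.coeff i G| * t ^ i =
        ∑ i ∈ Finset.range N, |PowerSeries.coeff i (∏ Q ∈ U (Fq := Fq) N,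
          loc (uu P a Q) (uu P b Q) ((a * b) ^ Q.natDegree) Q.natDegree)| * t ^ i := by
      refine Finset.sum_congr rfl fun i hi => ?_
      rw [Finset.mem_range] at hi
      rw [kG' N i (by omega)]
    rw [h1]
    refine (Bd.prod (U (Fq := Fq) N) _ _ ht0.le (fun Q _ => bl Q t ht0.le ht1) N).trans ?_
    calc _ ≤ ∏ Q ∈ U (Fq := Fq) N, Real.exp (30 * t ^ (2 * Q.natDegree)) := by
          refine Finset.prod_le_prod (fun Q _ => by positivity) (fun Q _ => ?_)
          rw [add_comm]; exact Real.add_one_le_exp _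
      _ = Real.exp (30 * ∑ Q ∈ U (Fq := Fq) N, t ^ (2 * Q.natDegree)) := by
          rw [← Real.exp_sum, Finset.mul_sum]
      _ ≤ _ := by
          apply Real.exp_le_exp.2
          exact mul_le_mul_of_nonneg_left (sum_U_le N ht0.le hlt) (by norm_num)
  have bH := (bG.mul ht0.le (Bd.of_poly La _ hLa ht0.le)).mul ht0.le (Bd.of_poly Lb _ hLb ht0.le)
  obtain ⟨A, bA⟩ : ∃ A, Bd H t A := ⟨_, bH⟩
  refine ⟨A, fun d => (asymp F H (a * b) q t A hs hq1 hF htq bA d).trans ?_⟩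
  · refine mul_le_mul_of_nonneg_left ?_ bA.nonneg
    rw [ht, ← Real.rpow_neg hq0.le, neg_neg, ← Real.rpow_natCast, ← Real.rpow_mul hq0.le]
    refine Real.rpow_le_rpow_of_exponent_le hq1.le ?_
    exact mul_le_mul_of_nonneg_right (by linarith) (Nat.cast_nonneg d)

lemma indic (i k : ℕ) (hk : k ≤ 1) :
    (if i % 2 = k then (1 : ℝ) else 0) = (1 + (-1) ^ k * (-1) ^ i) / 2 := by
  rcases Nat.mod_two_eq_zero_or_one i with h | h <;> interval_cases k
  · rw [(Nat.even_iff.2 h).neg_one_pow]; simp [h]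
  · rw [(Nat.even_iff.2 h).neg_one_pow]; simp [h]
  · rw [(Nat.odd_iff.2 h).neg_one_pow]; simp [h]
  · rw [(Nat.odd_iff.2 h).neg_one_pow]; simp [h]

lemma Nk_eq {P : Fq[X]} (hP : P.Monic) (hPi : Irreducible P) (k1 k2 d : ℕ) (hk1 : k1 ≤ 1)
    (hk2 : k2 ≤ 1) (F : ℝ → ℝ → ℝ) (hF : ∀ a b, F a b =
      PowerSeries.coeff d (gen (tri ∅) (fun t => (pr t).natDegree)
        (tw (uu P a) (uu P b) (fun f => (a * b) ^ f.natDegree)))) :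
    (Nk k1 k2 d P : ℝ) = 1 / 4 * (F 1 1 + (-1) ^ k2 * F 1 (-1) + (-1) ^ k1 * F (-1) 1 +
      (-1) ^ k1 * (-1) ^ k2 * F (-1) (-1)) := by
  have hfin := finite_tri (Fq := Fq) ∅ d
  set M := hfin.toFinset with hM
  have hmem : ∀ t, t ∈ M ↔ t ∈ tri ∅ ∧ (pr t).natDegree = d := fun t => by simp [hM]
  have hF' : ∀ a b, F a b = ∑ t ∈ M, (chiP P (t.1 * t.2.1) : ℝ) *
      (a ^ (t.1 * t.2.2).natDegree * b ^ (t.2.1 * t.2.2).natDegree) := by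
    intro a b
    rw [hF, gen, PowerSeries.coeff_mk, finsum_mem_eq_finite_toFinset_sum _ hfin]
    refine Finset.sum_congr rfl fun t ht => ?_
    obtain ⟨⟨h1, h2, h3, _⟩, _⟩ := (hmem t).1 ht
    rw [tw, uu, uu, chiP_mul hP hPi, h1.natDegree_mul h3, h2.natDegree_mul h3, pow_add, pow_add,
      mul_pow]
    push_cast; ring
  have hN : Nk k1 k2 d P = ∑ t ∈ M.filter (fun t => (t.1 * t.2.2).natDegree % 2 = k1 ∧
      (t.2.1 * t.2.2).natDegree % 2 = k2), chiP P (t.1 * t.2.1) := by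
    rw [Nk, ← finsum_mem_finset_eq_sum]
    refine finsum_mem_congr ?_ (fun _ _ => rfl)
    ext t
    simp only [Finset.coe_filter, Set.mem_ofPred_eq, hmem, tri, pr]
    simp
    tauto
  rw [hN, Finset.sum_filter]
  push_cast
  simp only [hF', Finset.mul_sum, ← Finset.sum_add_distrib]
  refine Finset.sum_congr rfl fun t _ => ?_
  have i1 := indic (t.1 * t.2.2).natDegree k1 hk1
  have i2 := indic (t.2.1 * t.2.2).natDegree k2 hk2
  have : (if (t.1 * t.2.2).natDegree % 2 = k1 ∧ (t.2.1 * t.2.2).natDegree % 2 = k2 then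
      (chiP P (t.1 * t.2.1) : ℝ) else 0) = (chiP P (t.1 * t.2.1) : ℝ) *
      ((if (t.1 * t.2.2).natDegree % 2 = k1 then (1 : ℝ) else 0) *
      (if (t.2.1 * t.2.2).natDegree % 2 = k2 then (1 : ℝ) else 0)) := by
    clear i1 i2
    by_cases c1 : (t.1 * t.2.2).natDegree % 2 = k1
    · by_cases c2 : (t.2.1 * t.2.2).natDegree % 2 = k2
      · rw [if_pos ⟨c1, c2⟩, if_pos c1, if_pos c2]; ring
      · rw [if_neg (fun h => c2 h.2), if_neg c2]; ring
    · rw [if_neg (fun h => c1 h.1), if_neg c1]; ring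
  rw [this, i1, i2, one_pow, one_pow]
  ring

end chi

end Pf

/-- there are constants `C_even`, `C_odd` such that for every `ε > 0` there
is `C_ε` with `|N_{k1,k2}(d;P) - (C_{parity(d)}/4)·q^d| ≤ C_ε·q^{(1/2+ε)d}` for all `d`. -/
theorem stmt6 (q : ℕ) (hq_odd : Odd q) (hq_pp : IsPrimePow q)
    (Fq : Type) [Field Fq] [Fintype Fq] (hFq : Fintype.card Fq = q)
    (P : Fq[X]) (hPmonic : P.Monic) (hPirr : Irreducible P)
    (k1 k2 : ℕ) (hk1 : k1 ≤ 1) (hk2 : k2 ≤ 1) :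
    ∃ Ceven Codd : ℝ, ∀ ε : ℝ, 0 < ε → ∃ Cε : ℝ, ∀ d : ℕ,
      |((Nk k1 k2 d P : ℝ)) - (if Even d then Ceven else Codd) / 4 * (q : ℝ) ^ d| ≤
        Cε * (q : ℝ) ^ ((1 / 2 + ε) * (d : ℝ)) := by
  subst hFq
  have p : (1 : ℝ) = 1 ∨ (1 : ℝ) = -1 := Or.inl rfl
  have m : (-1 : ℝ) = 1 ∨ (-1 : ℝ) = -1 := Or.inr rfl
  obtain ⟨c1, h1⟩ := Pf.core hPmonic hPirr hq_odd 1 1 p p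
  obtain ⟨c2, h2⟩ := Pf.core hPmonic hPirr hq_odd 1 (-1) p m
  obtain ⟨c3, h3⟩ := Pf.core hPmonic hPirr hq_odd (-1) 1 m p
  obtain ⟨c4, h4⟩ := Pf.core hPmonic hPirr hq_odd (-1) (-1) m m
  refine ⟨c1 + (-1) ^ k2 * c2 + (-1) ^ k1 * c3 + (-1) ^ k1 * (-1) ^ k2 * c4,
    c1 - (-1) ^ k2 * c2 - (-1) ^ k1 * c3 + (-1) ^ k1 * (-1) ^ k2 * c4, fun ε hε => ?_⟩
  obtain ⟨K1, h1⟩ := h1 ε hε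
  obtain ⟨K2, h2⟩ := h2 ε hε
  obtain ⟨K3, h3⟩ := h3 ε hε
  obtain ⟨K4, h4⟩ := h4 ε hε
  refine ⟨1 / 4 * (K1 + K2 + K3 + K4), fun d => ?_⟩
  have hN := Pf.Nk_eq hPmonic hPirr k1 k2 d hk1 hk2 _ (fun a b => rfl)
  rw [hN]
  have g1 := h1 d
  have g2 := h2 d
  have g3 := h3 d
  have g4 := h4 d
  clear h1 h2 h3 h4 hN
  generalize PowerSeries.coeff d (Pf.gen (Pf.tri ∅) (fun t => (Pf.pr t).natDegree)
        (Pf.tw (Pf.uu P 1) (Pf.uu P 1) (fun f => ((1 : ℝ) * 1) ^ f.natDegree))) = F1 at *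
  generalize PowerSeries.coeff d (Pf.gen (Pf.tri ∅) (fun t => (Pf.pr t).natDegree)
        (Pf.tw (Pf.uu P 1) (Pf.uu P (-1)) (fun f => ((1 : ℝ) * -1) ^ f.natDegree))) = F2 at *
  generalize PowerSeries.coeff d (Pf.gen (Pf.tri ∅) (fun t => (Pf.pr t).natDegree)
        (Pf.tw (Pf.uu P (-1)) (Pf.uu P 1) (fun f => ((-1 : ℝ) * 1) ^ f.natDegree))) = F3 at *
  generalize PowerSeries.coeff d (Pf.gen (Pf.tri ∅) (fun t => (Pf.pr t).natDegree)
        (Pf.tw (Pf.uu P (-1)) (Pf.uu P (-1)) (fun f => ((-1 : ℝ) * -1) ^ f.natDegree))) = F4 at *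
  generalize (Fintype.card Fq : ℝ) ^ ((1 / 2 + ε) * (d : ℝ)) = B at *
  generalize (Fintype.card Fq : ℝ) ^ d = D at *
  have s1 : |((-1 : ℝ)) ^ k1| = 1 := by simp
  have s2 : |((-1 : ℝ)) ^ k2| = 1 := by simp
  have hC : (if Even d then c1 + (-1) ^ k2 * c2 + (-1) ^ k1 * c3 + (-1) ^ k1 * (-1) ^ k2 * c4 else
      c1 - (-1) ^ k2 * c2 - (-1) ^ k1 * c3 + (-1) ^ k1 * (-1) ^ k2 * c4) =
      c1 * (1 * 1) ^ d + (-1) ^ k2 * (c2 * (1 * -1) ^ d) + (-1) ^ k1 * (c3 * (-1 * 1) ^ d) +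
        (-1) ^ k1 * (-1) ^ k2 * (c4 * (-1 * -1) ^ d) := by
    split_ifs with h
    · simp [h.neg_one_pow]
    · simp [(Nat.not_even_iff_odd.1 h).neg_one_pow]; ring
  rw [hC]
  have e : ∀ x y X2 X3 X4 : ℝ, |x| = 1 → |y| = 1 → |X2| ≤ K2 * B → |X3| ≤ K3 * B → |X4| ≤ K4 * B →
      |y * X2| ≤ K2 * B ∧ |x * X3| ≤ K3 * B ∧ |x * y * X4| ≤ K4 * B := by
    intro x y X2 X3 X4 hx hy a2 a3 a4
    simp [abs_mul, hx, hy, a2, a3, a4]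
  obtain ⟨f2, f3, f4⟩ := e _ _ _ _ _ s1 s2 g2 g3 g4
  clear s1 s2 hC e g2 g3 g4
  generalize ((1 : ℝ) * 1) ^ d = e1 at *
  generalize ((1 : ℝ) * -1) ^ d = e2 at *
  generalize ((-1 : ℝ) * 1) ^ d = e3 at *
  generalize ((-1 : ℝ) * -1) ^ d = e4 at *
  generalize (-1 : ℝ) ^ k1 = x at *
  generalize (-1 : ℝ) ^ k2 = y at *
  rw [abs_le] at g1 f2 f3 f4 ⊢
  obtain ⟨u1, v1⟩ := g1
  obtain ⟨u2, v2⟩ := f2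
  obtain ⟨u3, v3⟩ := f3
  obtain ⟨u4, v4⟩ := f4
  constructor <;> linarith
end

section
/- Let q be a prime power. There is a constant C, depending only on q, such that for every integer M ≥ 1, the absolute value of [ (the sum over all monic irreducible Q ∈ F_q[X] with 1 ≤ deg Q ≤ M of q^{−(1 − 1/M)·deg Q}) minus log M ] is at most C. -/
open Polynomial

open Classical in
/-- monic irreducibles of degree `n` -/
noncomputable def irrSet (Fq : Type) [Field Fq] [Fintype Fq] (n : ℕ) : Finset Fq[X] :=
  (UniqueFactorizationMonoid.normalizedFactors
    (X ^ (Fintype.card Fq) ^ n - X : Fq[X])).toFinset.filter (fun Q => Q.natDegree = n)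

lemma mem_irrSet (Fq : Type) [Field Fq] [Fintype Fq] {n : ℕ} (hn : 1 ≤ n) (Q : Fq[X]) :
    Q ∈ irrSet Fq n ↔ Q.Monic ∧ Irreducible Q ∧ Q.natDegree = n := by
  classical
  have h0 : (X ^ (Fintype.card Fq) ^ n - X : Fq[X]) ≠ 0 :=
    FiniteField.X_pow_card_pow_sub_X_ne_zero _ (by omega) Fintype.one_lt_card
  have hm := Polynomial.mem_normalizedFactors_iff (p := Q) h0
  unfold irrSet
  rw [Finset.mem_filter, Multiset.mem_toFinset]
  constructor
  · rintro ⟨h, hd⟩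
    have h := (by convert hm.1 (by convert h) :  Irreducible Q ∧ Q.Monic ∧ _)
    exact ⟨h.2.1, h.1, hd⟩
  · rintro ⟨h1, h2, hd⟩
    refine ⟨?_, hd⟩
    have := hm.2 ⟨h2, h1, by
      have := (h2.natDegree_dvd_iff_dvd_X_pow_card_pow_sub_X (n := n)).1 (by rw [hd])
      rwa [Nat.card_eq_fintype_card] at this⟩
    convert this

lemma sum_divisors (Fq : Type) [Field Fq] [Fintype Fq] {n : ℕ} (hn : 1 ≤ n) :
    ∑ d ∈ n.divisors, d * (irrSet Fq d).card = (Fintype.card Fq) ^ n := by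
  classical
  set P := (X ^ (Fintype.card Fq) ^ n - X : Fq[X]) with hP
  have h0 : P ≠ 0 :=
    FiniteField.X_pow_card_pow_sub_X_ne_zero _ (by omega) Fintype.one_lt_card
  have hdeg : P.natDegree = (Fintype.card Fq) ^ n :=
    FiniteField.X_pow_card_pow_sub_X_natDegree_eq _ (by omega) Fintype.one_lt_card
  obtain ⟨p, hp⟩ := CharP.exists Fq
  have hsep : P.Separable := by
    apply galois_poly_separable p
    apply dvd_pow _ (by omega)
    rw [← CharP.cast_eq_zero_iff Fq p]
    simp
  have hnd := (UniqueFactorizationMonoid.squarefree_iff_nodup_normalizedFactors h0).1 hsep.squarefree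
  have hprod := UniqueFactorizationMonoid.prod_normalizedFactors h0
  have hd2 := natDegree_eq_of_degree_eq (degree_eq_degree_of_associated hprod)
  rw [natDegree_multiset_prod _ (UniqueFactorizationMonoid.zero_notMem_normalizedFactors _), hdeg] at hd2
  rw [← hd2]
  have e1 : (Multiset.map natDegree (UniqueFactorizationMonoid.normalizedFactors P)).sum
      = ∑ Q ∈ (UniqueFactorizationMonoid.normalizedFactors P).toFinset, Q.natDegree := by
    rw [Finset.sum, Multiset.toFinset_val, hnd.dedup]
  have e2 : (UniqueFactorizationMonoid.normalizedFactors P).toFinset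
      = n.divisors.biUnion (irrSet Fq) := by
    ext Q
    rw [Multiset.mem_toFinset, Polynomial.mem_normalizedFactors_iff h0, Finset.mem_biUnion]
    constructor
    · rintro ⟨h1, h2, h3⟩
      rw [hP, ← Nat.card_eq_fintype_card,
        ← h1.natDegree_dvd_iff_dvd_X_pow_card_pow_sub_X] at h3
      exact ⟨Q.natDegree, by rw [Nat.mem_divisors]; exact ⟨h3, by omega⟩,
        (mem_irrSet Fq h1.natDegree_pos Q).2 ⟨h2, h1, rfl⟩⟩
    · rintro ⟨d, hd, hQ⟩
      rw [mem_irrSet Fq (Nat.pos_of_mem_divisors hd)] at hQ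
      refine ⟨hQ.2.1, hQ.1, ?_⟩
      rw [hP, ← Nat.card_eq_fintype_card,
        ← hQ.2.1.natDegree_dvd_iff_dvd_X_pow_card_pow_sub_X, hQ.2.2]
      exact Nat.dvd_of_mem_divisors hd
  rw [e1, e2, Finset.sum_biUnion]
  · apply Finset.sum_congr rfl
    intro d hd
    rw [Finset.sum_congr rfl (g := fun _ => d), Finset.sum_const, smul_eq_mul, mul_comm]
    intro Q hQ
    exact ((mem_irrSet Fq (Nat.pos_of_mem_divisors hd) Q).1 hQ).2.2
  · intro a ha b hb hab
    rw [Function.onFun, Finset.disjoint_left]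
    intro Q h1 h2
    rw [mem_irrSet Fq (Nat.pos_of_mem_divisors ha)] at h1
    rw [mem_irrSet Fq (Nat.pos_of_mem_divisors hb)] at h2
    exact hab (h1.2.2.symm.trans h2.2.2)

lemma card_upper (Fq : Type) [Field Fq] [Fintype Fq] {n : ℕ} (hn : 1 ≤ n) :
    n * (irrSet Fq n).card ≤ (Fintype.card Fq) ^ n := by
  rw [← sum_divisors Fq hn]
  exact Finset.single_le_sum (f := fun d => d * (irrSet Fq d).card) (fun _ _ => Nat.zero_le _)
    (Nat.mem_divisors_self n (by omega))

lemma card_lower (Fq : Type) [Field Fq] [Fintype Fq] {n : ℕ} (hn : 1 ≤ n) :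
    (Fintype.card Fq) ^ n ≤ n * (irrSet Fq n).card + (Fintype.card Fq) ^ (n / 2 + 1) := by
  have hq : 2 ≤ Fintype.card Fq := Fintype.one_lt_card
  rw [← sum_divisors Fq hn, ← Nat.cons_self_properDivisors (by omega), Finset.sum_cons]
  gcongr
  calc ∑ d ∈ n.properDivisors, d * (irrSet Fq d).card
      ≤ ∑ d ∈ n.properDivisors, (Fintype.card Fq) ^ d := by
        apply Finset.sum_le_sum
        intro d hd
        exact card_upper Fq (Nat.pos_of_mem_properDivisors hd)
    _ ≤ ∑ d ∈ Finset.range (n / 2 + 1), (Fintype.card Fq) ^ d := by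
        apply Finset.sum_le_sum_of_subset
        intro d hd
        rw [Nat.mem_properDivisors] at hd
        obtain ⟨⟨k, hk⟩, hlt⟩ := hd
        rw [Finset.mem_range, Nat.lt_succ_iff, Nat.le_div_iff_mul_le (by norm_num)]
        have : 2 ≤ k := by
          by_contra h
          have : k = 0 ∨ k = 1 := by omega
          rcases this with rfl | rfl <;> simp at hk <;> omega
        rw [hk]
        gcongr
    _ ≤ _ := (Nat.geomSum_lt hq (fun k hk => Finset.mem_range.1 hk)).le

/-- there is a constant `C` depending only on `q` such that for every
`M ≥ 1`, `|∑_{Q monic irreducible, 1 ≤ deg Q ≤ M} q^{-(1 - 1/M)·deg Q} - log M| ≤ C`. -/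
theorem stmt9 (q : ℕ) (hq_pp : IsPrimePow q)
    (Fq : Type) [Field Fq] [Fintype Fq] (hFq : Fintype.card Fq = q) :
    ∃ C : ℝ, ∀ M : ℕ, 1 ≤ M →
      |(∑ᶠ Q ∈ {Q : Fq[X] | Q.Monic ∧ Irreducible Q ∧ 1 ≤ Q.natDegree ∧ Q.natDegree ≤ M},
          (q : ℝ) ^ (-(1 - 1 / (M : ℝ)) * (Q.natDegree : ℝ))) - Real.log M| ≤ C := by
  classical
  have hq2 : 2 ≤ q := hFq ▸ Fintype.one_lt_card
  have hq2' : (2 : ℝ) ≤ q := by exact_mod_cast hq2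
  have hq0 : (0 : ℝ) < q := by linarith
  set r : ℝ := (Real.sqrt q)⁻¹ with hr
  have hs1 : 1 < Real.sqrt q := by rw [Real.lt_sqrt] <;> linarith
  have hr0 : 0 ≤ r := by positivity
  have hr1 : r < 1 := inv_lt_one_of_one_lt₀ hs1
  refine ⟨1 + q + q * (1 - r)⁻¹, fun M hM => ?_⟩
  have hM0 : (0 : ℝ) < M := by exact_mod_cast hM
  have hset : {Q : Fq[X] | Q.Monic ∧ Irreducible Q ∧ 1 ≤ Q.natDegree ∧ Q.natDegree ≤ M}
      = ↑((Finset.Icc 1 M).biUnion (irrSet Fq)) := by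
    ext Q
    simp only [Set.mem_setOf_eq, Finset.coe_biUnion, Set.mem_iUnion, Finset.mem_coe,
      Finset.mem_Icc, exists_prop]
    constructor
    · rintro ⟨h1, h2, h3, h4⟩
      exact ⟨Q.natDegree, ⟨h3, h4⟩, (mem_irrSet Fq h3 Q).2 ⟨h1, h2, rfl⟩⟩
    · rintro ⟨d, ⟨h1, h2⟩, h3⟩
      rw [mem_irrSet Fq h1] at h3
      obtain ⟨h4, h5, rfl⟩ := h3
      exact ⟨h4, h5, h1, h2⟩
  rw [hset, finsum_mem_coe_finset, Finset.sum_biUnion]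
  swap
  · intro a ha b hb hab
    rw [Function.onFun, Finset.disjoint_left]
    intro Q h1 h2
    simp only [Finset.coe_Icc, Set.mem_Icc] at ha hb
    rw [mem_irrSet Fq ha.1] at h1
    rw [mem_irrSet Fq hb.1] at h2
    exact hab (h1.2.2.symm.trans h2.2.2)
  have hterm : ∀ d ∈ Finset.Icc 1 M,
      ∑ Q ∈ irrSet Fq d, (q : ℝ) ^ (-(1 - 1 / (M : ℝ)) * (Q.natDegree : ℝ))
        ≤ (d : ℝ)⁻¹ + q * (M : ℝ)⁻¹ ∧
      (d : ℝ)⁻¹ - q * r ^ d ≤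
        ∑ Q ∈ irrSet Fq d, (q : ℝ) ^ (-(1 - 1 / (M : ℝ)) * (Q.natDegree : ℝ)) := by
    intro d hd
    rw [Finset.mem_Icc] at hd
    have hd1 : (1 : ℝ) ≤ d := by exact_mod_cast hd.1
    have hd0 : (0 : ℝ) < d := by linarith
    have hdM : (d : ℝ) ≤ M := by exact_mod_cast hd.2
    rw [Finset.sum_congr rfl (g := fun _ => ((q : ℝ) ^ d)⁻¹ * (q : ℝ) ^ ((d : ℝ) / M)),
      Finset.sum_const, nsmul_eq_mul]
    swap
    · intro Q hQ
      rw [((mem_irrSet Fq hd.1 Q).1 hQ).2.2, ← Real.rpow_natCast, ← Real.rpow_neg hq0.le,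
        ← Real.rpow_add hq0]
      congr 1
      ring
    have hup : (d : ℝ) * (irrSet Fq d).card ≤ (q : ℝ) ^ d := by
      have := card_upper Fq hd.1
      rw [hFq] at this
      exact_mod_cast this
    have hlo : (q : ℝ) ^ d ≤ (d : ℝ) * (irrSet Fq d).card + (q : ℝ) ^ (d / 2 + 1) := by
      have := card_lower Fq hd.1
      rw [hFq] at this
      exact_mod_cast this
    have hqd : (0 : ℝ) < (q : ℝ) ^ d := by positivity
    set N : ℝ := ((irrSet Fq d).card : ℝ) with hN
    have hN0 : 0 ≤ N := by positivity
    set t : ℝ := (q : ℝ) ^ ((d : ℝ) / M) with ht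
    have ht1 : 1 ≤ t := Real.one_le_rpow (by linarith) (by positivity)
    have ht2 : t ≤ 1 + q * (d / M) := by
      have := rpow_one_add_le_one_add_mul_self (s := (q : ℝ) - 1) (by linarith)
        (p := (d : ℝ) / M) (by positivity) (by rw [div_le_one hM0]; exact hdM)
      rw [add_sub_cancel] at this
      have h3 : (0 : ℝ) ≤ d / M := by positivity
      nlinarith
    have hu : N * ((q : ℝ) ^ d)⁻¹ ≤ (d : ℝ)⁻¹ := by
      rw [← div_eq_mul_inv, div_le_iff₀ hqd, inv_mul_eq_div, le_div_iff₀ hd0]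
      linarith
    constructor
    · calc N * (((q : ℝ) ^ d)⁻¹ * t) = (N * ((q : ℝ) ^ d)⁻¹) * t := by ring
        _ ≤ (d : ℝ)⁻¹ * (1 + q * (d / M)) := by gcongr
        _ = _ := by field_simp
    · have hsq : (q : ℝ) ^ (d / 2) ≤ Real.sqrt q ^ d := by
        calc (q : ℝ) ^ (d / 2) = Real.sqrt q ^ (2 * (d / 2)) := by
              rw [pow_mul, Real.sq_sqrt hq0.le]
          _ ≤ _ := pow_le_pow_right₀ hs1.le (by omega)
      have hqs : (q : ℝ) ^ d = Real.sqrt q ^ d * Real.sqrt q ^ d := by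
        rw [← mul_pow, Real.mul_self_sqrt hq0.le]
      have hsd : 0 < Real.sqrt q ^ d := by positivity
      have hrd : r ^ d * (q : ℝ) ^ d = Real.sqrt q ^ d := by
        rw [hr, inv_pow, hqs]
        field_simp
      have hl : (d : ℝ)⁻¹ - q * r ^ d ≤ N * ((q : ℝ) ^ d)⁻¹ := by
        rw [← div_eq_mul_inv, le_div_iff₀ hqd, sub_mul, mul_assoc, hrd, inv_mul_eq_div,
          sub_le_iff_le_add, div_le_iff₀ hd0]
        have h1 : (q : ℝ) ^ (d / 2 + 1) ≤ q * Real.sqrt q ^ d := by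
          rw [pow_succ, mul_comm]
          gcongr
        have h2 : 0 < q * Real.sqrt q ^ d := by positivity
        nlinarith
      calc _ ≤ N * ((q : ℝ) ^ d)⁻¹ * 1 := by rw [mul_one]; exact hl
        _ ≤ N * ((q : ℝ) ^ d)⁻¹ * t := by gcongr
        _ = _ := by ring
  have hU := Finset.sum_le_sum (fun d hd => (hterm d hd).1)
  have hL := Finset.sum_le_sum (fun d hd => (hterm d hd).2)
  rw [Finset.sum_add_distrib, Finset.sum_const, Nat.card_Icc, nsmul_eq_mul] at hU
  rw [Finset.sum_sub_distrib, ← Finset.mul_sum] at hL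
  have hH : ((harmonic M : ℚ) : ℝ) = ∑ d ∈ Finset.Icc 1 M, (d : ℝ)⁻¹ := by
    rw [harmonic_eq_sum_Icc]
    push_cast
    rfl
  rw [← hH] at hU hL
  have hh1 := harmonic_le_one_add_log M
  have hh2 : Real.log M ≤ harmonic M := by
    simpa using log_le_harmonic_floor (M : ℝ) hM0.le
  have hgeo : ∑ d ∈ Finset.Icc 1 M, r ^ d ≤ (1 - r)⁻¹ := by
    rw [← tsum_geometric_of_lt_one hr0 hr1]
    exact (summable_geometric_of_lt_one hr0 hr1).sum_le_tsum _ (fun _ _ => by positivity)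
  have hgeo' := mul_le_mul_of_nonneg_left hgeo hq0.le
  have hMM : ((M + 1 - 1 : ℕ) : ℝ) * (q * (M : ℝ)⁻¹) = q := by
    rw [Nat.add_sub_cancel]
    field_simp
  rw [hMM] at hU
  have hpos : 0 ≤ q * (1 - r)⁻¹ := by
    have : 0 ≤ (1 - r)⁻¹ := inv_nonneg.2 (by linarith)
    positivity
  rw [abs_le]
  constructor <;> linarith
end

section
/- Let q be a prime power. There is a constant C, depending only on q, such that for every integer M ≥ 1, the product over all monic irreducible Q ∈ F_q[X] of degree at most M of (1 + 2·q^{−(1 − 1/M)·deg Q}) is at most C·M^2. -/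
open Polynomial

lemma aux_dvd (Fq : Type) [Field Fq] [Fintype Fq] (Q : Fq[X]) (hQ : Irreducible Q) (hm : Q.Monic) :
    Q ∣ X ^ (Fintype.card Fq ^ Q.natDegree) - X := by
  classical
  have : Fact (Irreducible Q) := ⟨hQ⟩
  let pb := AdjoinRoot.powerBasis hm.ne_zero
  have : Module.Finite Fq (AdjoinRoot Q) := pb.finite
  have : Finite (AdjoinRoot Q) := Module.finite_of_finite Fq
  have : Fintype (AdjoinRoot Q) := Fintype.ofFinite _
  have hc : Fintype.card (AdjoinRoot Q) = Fintype.card Fq ^ Q.natDegree := by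
    rw [Module.card_eq_pow_finrank (K := Fq) (V := AdjoinRoot Q), pb.finrank]
    rfl
  rw [← AdjoinRoot.mk_eq_zero, map_sub, map_pow, ← hc, FiniteField.pow_card, sub_self]

lemma aux_count (Fq : Type) [Field Fq] [Fintype Fq] (d : ℕ) (hd : 1 ≤ d) (S : Finset Fq[X])
    (hS : ∀ Q ∈ S, Q.Monic ∧ Irreducible Q ∧ Q.natDegree = d) :
    S.card * d ≤ Fintype.card Fq ^ d := by
  have h1 : 1 < Fintype.card Fq ^ d := Nat.one_lt_pow (by omega) Fintype.one_lt_card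
  have hdvd : (∏ Q ∈ S, Q) ∣ (X ^ (Fintype.card Fq ^ d) - X : Fq[X]) := by
    apply Finset.prod_dvd_of_coprime
    · intro P hP Q hQ hne
      obtain ⟨a1, a2, a3⟩ := hS P hP
      obtain ⟨b1, b2, b3⟩ := hS Q hQ
      refine (a2.coprime_iff_not_dvd).2 fun h => hne ?_
      exact eq_of_monic_of_associated a1 b1 (a2.associated_of_dvd b2 h)
    · intro Q hQ
      obtain ⟨b1, b2, b3⟩ := hS Q hQ
      simpa [b3] using aux_dvd Fq Q b2 b1
  have := natDegree_le_of_dvd hdvd (FiniteField.X_pow_card_sub_X_ne_zero Fq h1)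
  rw [FiniteField.X_pow_card_sub_X_natDegree_eq Fq h1,
    natDegree_prod_of_monic _ _ (fun Q hQ => (hS Q hQ).1),
    Finset.sum_congr rfl (fun Q hQ => (hS Q hQ).2.2)] at this
  simpa using this

lemma aux_finite (Fq : Type) [Field Fq] [Fintype Fq] (M : ℕ) :
    {Q : Fq[X] | Q.Monic ∧ Irreducible Q ∧ Q.natDegree ≤ M}.Finite := by
  have : Finite (degreeLT Fq (M+1)) := Finite.of_equiv _ (degreeLTEquiv Fq (M+1)).symm.toEquiv
  refine (Set.toFinite (degreeLT Fq (M+1) : Set Fq[X])).subset ?_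
  rintro Q ⟨h1, _, h3⟩
  simp only [SetLike.mem_coe, mem_degreeLT]
  rw [degree_eq_natDegree h1.ne_zero]
  exact_mod_cast Nat.lt_succ_of_le h3

/-- there is a constant `C` depending only on `q` such that for every
`M ≥ 1`, `∏_{Q monic irreducible, deg Q ≤ M} (1 + 2·q^{-(1 - 1/M)·deg Q}) ≤ C·M²`. -/
theorem stmt10 (q : ℕ) (hq_pp : IsPrimePow q)
    (Fq : Type) [Field Fq] [Fintype Fq] (hFq : Fintype.card Fq = q) :
    ∃ C : ℝ, ∀ M : ℕ, 1 ≤ M →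
      (∏ᶠ Q ∈ {Q : Fq[X] | Q.Monic ∧ Irreducible Q ∧ Q.natDegree ≤ M},
          (1 + 2 * (q : ℝ) ^ (-(1 - 1 / (M : ℝ)) * (Q.natDegree : ℝ)))) ≤ C * (M : ℝ) ^ 2 := by
  classical
  refine ⟨Real.exp (2 * (1 + q)), fun M hM => ?_⟩
  have hq0 : (0:ℝ) < q := by exact_mod_cast hq_pp.pos
  have hM0 : (0:ℝ) < M := by exact_mod_cast hM
  have hfin := aux_finite Fq M
  rw [finprod_mem_eq_finite_toFinset_prod _ hfin]
  set S := hfin.toFinset with hSdef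
  have hS : ∀ Q ∈ S, Q.Monic ∧ Irreducible Q ∧ Q.natDegree ≤ M := fun Q hQ => by
    simpa [hSdef] using hQ
  have hmaps : ∀ Q ∈ S, Q.natDegree ∈ Finset.Icc 1 M := fun Q hQ =>
    Finset.mem_Icc.2 ⟨(hS Q hQ).2.1.natDegree_pos, (hS Q hQ).2.2⟩
  have hterm : ∀ d ∈ Finset.Icc 1 M,
      (∑ Q ∈ S with Q.natDegree = d, (q:ℝ) ^ (-(1 - 1 / (M : ℝ)) * (Q.natDegree : ℝ)))
        ≤ (d:ℝ)⁻¹ + q / M := by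
    intro d hd
    obtain ⟨hd1, hd2⟩ := Finset.mem_Icc.1 hd
    have hd0 : (0:ℝ) < d := by exact_mod_cast hd1
    have hcnt := aux_count Fq d hd1 (S.filter fun Q => Q.natDegree = d) (fun Q hQ => by
      obtain ⟨h1, h2⟩ := Finset.mem_filter.1 hQ
      exact ⟨(hS Q h1).1, (hS Q h1).2.1, h2⟩)
    rw [hFq] at hcnt
    have hcnt' : ((S.filter fun Q => Q.natDegree = d).card : ℝ) * d ≤ (q:ℝ) ^ d := by
      exact_mod_cast hcnt
    rw [Finset.sum_congr rfl (g := fun _ => (q:ℝ) ^ (-(1 - 1 / (M : ℝ)) * (d : ℝ)))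
      (fun Q hQ => by rw [(Finset.mem_filter.1 hQ).2]), Finset.sum_const, nsmul_eq_mul]
    have hsplit : (q:ℝ) ^ (-(1 - 1 / (M : ℝ)) * (d : ℝ)) = ((q:ℝ)^d)⁻¹ * (q:ℝ) ^ ((d:ℝ)/M) := by
      rw [← Real.rpow_natCast, ← Real.rpow_neg hq0.le, ← Real.rpow_add hq0]
      congr 1
      field_simp
      ring
    have hbern : (q:ℝ) ^ ((d:ℝ)/M) ≤ 1 + d / M * q := by
      have hle : (d:ℝ)/M ≤ 1 := (div_le_one hM0).2 (by exact_mod_cast hd2)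
      have := rpow_one_add_le_one_add_mul_self (s := (q:ℝ) - 1) (by linarith)
        (p := (d:ℝ)/M) (by positivity) hle
      rw [add_sub_cancel] at this
      have h2 : 0 ≤ (d:ℝ)/M := by positivity
      linarith
    have hqd : (0:ℝ) < (q:ℝ)^d := by positivity
    rw [hsplit]
    calc _ ≤ ((q:ℝ)^d / d) * (((q:ℝ)^d)⁻¹ * (1 + d / M * q)) := by
          gcongr
          exact (le_div_iff₀ hd0).2 hcnt'
      _ = _ := by field_simp
  have hsum : (∑ Q ∈ S, (q:ℝ) ^ (-(1 - 1 / (M : ℝ)) * (Q.natDegree : ℝ)))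
      ≤ 1 + Real.log M + q := by
    rw [← Finset.sum_fiberwise_of_maps_to hmaps]
    refine (Finset.sum_le_sum hterm).trans ?_
    rw [Finset.sum_add_distrib]
    have hh := harmonic_le_one_add_log M
    rw [harmonic_eq_sum_Icc] at hh
    push_cast at hh
    have : ∑ i ∈ Finset.Icc 1 M, (q:ℝ) / M = q := by
      simp
      field_simp
    linarith
  calc _ ≤ ∏ Q ∈ S, Real.exp (2 * (q:ℝ) ^ (-(1 - 1 / (M : ℝ)) * (Q.natDegree : ℝ))) := by
        refine Finset.prod_le_prod (fun Q _ => by positivity) (fun Q _ => ?_)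
        rw [add_comm]
        exact Real.add_one_le_exp _
    _ = Real.exp (2 * ∑ Q ∈ S, (q:ℝ) ^ (-(1 - 1 / (M : ℝ)) * (Q.natDegree : ℝ))) := by
        rw [← Real.exp_sum, Finset.mul_sum]
    _ ≤ Real.exp (2 * (1 + q) + (Real.log M + Real.log M)) := by
        apply Real.exp_le_exp.2
        linarith
    _ = _ := by
        rw [Real.exp_add, Real.exp_add, Real.exp_log hM0, sq]
end
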